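/- arXiv:1008.1852 — 4 statements merged into one kernel-verified Lean document; each statement's English description precedes it below -/
import Mathlib

section
/- Let n ≥ 1 and let V : ℝⁿ → ℝ be smooth. Set S_h = {(q,p) ∈ ℝⁿ × ℝⁿ : V(q) + ‖p‖²/2 = h} for h ∈ ℝ. Assume S_h is nonempty, compact, and a regular level set (for every (q,p) ∈ S_h one has (∇V(q), p) ≠ (0,0)). Then there exist T > 0 and a nonconstant C² curve q : ℝ → ℝⁿ, periodic of period T, such that q''(t) = −∇V(q(t)) for all t ∈ ℝ and V(q(0)) + ‖q'(0)‖²/2 = h; that is, there exists a closed orbit of the Hamiltonian flow of H_V on S_h. -/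
open Set

section Helpers
open Set Filter Topology MeasureTheory
set_option linter.unusedSectionVars false


lemma exists_poly_det {F : Type*} [NormedAddCommGroup F] [NormedSpace ℝ F]
    [FiniteDimensional ℝ F] (A : F →L[ℝ] F) :
    ∃ P : Polynomial ℝ, P.natDegree ≤ Module.finrank ℝ F ∧
      ∀ t : ℝ, P.eval t = (ContinuousLinearMap.id ℝ F + t • A).det := by
  let b := Module.finBasis ℝ F
  let M := LinearMap.toMatrix b b (A : F →ₗ[ℝ] F)
  refine ⟨Matrix.det ((Polynomial.X : Polynomial ℝ) • M.map Polynomial.C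
    + (1 : Matrix _ _ ℝ).map Polynomial.C), ?_, ?_⟩
  · simpa using Polynomial.natDegree_det_X_add_C_le M 1
  · intro t
    have h1 : (ContinuousLinearMap.id ℝ F + t • A).det
        = Matrix.det (1 + t • M) := by
      rw [ContinuousLinearMap.det, ← LinearMap.det_toMatrix b]
      congr 1
      simp [M]
    rw [h1, ← Polynomial.coe_evalRingHom, RingHom.map_det]
    congr 1
    ext i j
    by_cases hij : i = j <;> simp [hij, add_comm] <;> ring

section
variable {F : Type*} [NormedAddCommGroup F] [InnerProductSpace ℝ F]
    [FiniteDimensional ℝ F]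

lemma lipschitz_extend_zero (R C : ℝ) (hC : 0 ≤ C) (w w' : F → F)
    (hw : ∀ x y, ‖x‖ ≤ R → ‖y‖ ≤ R → ‖w x - w y‖ ≤ C * ‖x - y‖)
    (h0 : ∀ x, ‖x‖ = R → w x = 0)
    (hin : ∀ x, ‖x‖ ≤ R → w' x = w x) (hout : ∀ x, R < ‖x‖ → w' x = 0) (x y : F) :
    ‖w' x - w' y‖ ≤ C * ‖x - y‖ := by
  have key : ∀ x y : F, ‖x‖ ≤ R → R < ‖y‖ → ‖w x‖ ≤ C * ‖x - y‖ := by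
    intro x y hx hy
    have hc : Continuous fun t : ℝ => ‖x + t • (y - x)‖ := by fun_prop
    have := intermediate_value_Icc (zero_le_one) hc.continuousOn
    obtain ⟨t, ht, hz⟩ := this (show R ∈ _ from ⟨by simpa using hx, by simpa using hy.le⟩)
    have h1 := hw x (x + t • (y - x)) hx hz.le
    rw [h0 _ hz, sub_zero] at h1
    refine h1.trans (mul_le_mul_of_nonneg_left ?_ hC)
    rw [show x - (x + t • (y - x)) = t • (x - y) by module, norm_smul, Real.norm_of_nonneg ht.1]
    exact mul_le_of_le_one_left (norm_nonneg _) ht.2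
  rcases le_or_gt ‖x‖ R with hx | hx <;> rcases le_or_gt ‖y‖ R with hy | hy
  · rw [hin x hx, hin y hy]; exact hw x y hx hy
  · rw [hin x hx, hout y hy, sub_zero]; exact key x y hx hy
  · rw [hin y hy, hout x hx, zero_sub, norm_neg, norm_sub_rev]; exact key y x hy hx
  · rw [hout x hx, hout y hy]; simp; positivity

lemma no_retraction [MeasurableSpace F] [BorelSpace F] (R : ℝ) (hR : 0 < R) (f : F → F)
    (hf : ContDiff ℝ 1 f) (hn : ∀ x, ‖f x‖ = R) (hS : ∀ x, ‖x‖ = R → f x = x) : False := by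
  classical
  set A : F → F →L[ℝ] F := fun x => fderiv ℝ f x - ContinuousLinearMap.id ℝ F with hA
  have hAc : Continuous A := (hf.continuous_fderiv one_ne_zero).sub continuous_const
  set B := Metric.closedBall (0 : F) R with hB
  have hBc : IsCompact B := isCompact_closedBall _ _
  obtain ⟨C0, hC0⟩ := hBc.exists_bound_of_continuousOn hAc.continuousOn
  set C := max C0 1 with hCdef
  have hC : ∀ x ∈ B, ‖A x‖ ≤ C := fun x hx => (hC0 x hx).trans (le_max_left _ _)
  have hCpos : 0 < C := lt_of_lt_of_le one_pos (le_max_right _ _)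
  set w : F → F := fun x => f x - x with hw
  have hwd : ∀ x, HasFDerivAt w (A x) x := fun x =>
    ((hf.differentiable one_ne_zero) x).hasFDerivAt.sub (hasFDerivAt_id x)
  have hwl : ∀ x y, ‖x‖ ≤ R → ‖y‖ ≤ R → ‖w x - w y‖ ≤ C * ‖x - y‖ := by
    intro x y hx hy
    exact (convex_closedBall (0:F) R).norm_image_sub_le_of_norm_hasFDerivWithin_le
      (fun z _ => (hwd z).hasFDerivWithinAt) hC
      (by simpa [hB] using hy) (by simpa [hB] using hx)
  set w' : F → F := fun x => if ‖x‖ ≤ R then w x else 0 with hw'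
  have hin : ∀ x, ‖x‖ ≤ R → w' x = w x := fun x hx => by simp [hw', hx]
  have hout : ∀ x, R < ‖x‖ → w' x = 0 := fun x hx => by simp [hw', hx]
  have hlip := lipschitz_extend_zero R C hCpos.le w w' hwl
    (fun x hx => by simp [hw, hS x hx]) hin hout
  -- positivity of the determinant near the identity
  have hdet : ∀ᶠ L in 𝓝 (ContinuousLinearMap.id ℝ F), 0 < L.det := by
    have := (ContinuousLinearMap.continuous_det (E := F) (𝕜 := ℝ)).continuousAt
      (x := ContinuousLinearMap.id ℝ F)
    refine this.eventually (lt_mem_nhds ?_)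
    simp [ContinuousLinearMap.det]
  obtain ⟨ε, hε, hεd⟩ := Metric.eventually_nhds_iff.1 hdet
  set t0 := min (1 / (2 * C)) (ε / (2 * C)) with ht0
  have ht0pos : 0 < t0 := by positivity
  set p : ℝ → ℝ := fun t => ∫ x in B, (ContinuousLinearMap.id ℝ F + t • A x).det with hp
  have hcont : ∀ t : ℝ, Continuous fun x => (ContinuousLinearMap.id ℝ F + t • A x).det := by
    intro t
    exact ContinuousLinearMap.continuous_det.comp (continuous_const.add (hAc.const_smul t))
  have hvol : ∀ t, 0 ≤ t → t ≤ t0 → p t = volume.real B := by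
    intro t ht ht1
    have htC : t * C ≤ 1 / 2 := by
      have : t ≤ 1 / (2 * C) := ht1.trans (min_le_left _ _)
      rw [le_div_iff₀ (by positivity)] at this; linarith
    have htε : t * C < ε := by
      have : t ≤ ε / (2 * C) := ht1.trans (min_le_right _ _)
      rw [le_div_iff₀ (by positivity)] at this; linarith
    set g : F → F := fun x => x + t • w' x with hg
    have hap : ∀ x y : F, ‖g x - g y - (x - y)‖ ≤ 1 / 2 * ‖x - y‖ := by
      intro x y
      rw [show g x - g y - (x - y) = t • (w' x - w' y) by simp only [hg]; module, norm_smul,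
        Real.norm_of_nonneg ht]
      calc t * ‖w' x - w' y‖ ≤ t * (C * ‖x - y‖) := by gcongr; exact hlip x y
        _ = (t * C) * ‖x - y‖ := by ring
        _ ≤ _ := by gcongr
    have hinj : Function.Injective g := by
      intro x y hxy
      have := hap x y
      rw [hxy, sub_self, zero_sub, norm_neg] at this
      have h2 : ‖x - y‖ = 0 := le_antisymm (by linarith) (norm_nonneg _)
      exact sub_eq_zero.1 (norm_eq_zero.1 h2)
    have hsurj : Function.Surjective g := by
      intro y
      have hcontr : ContractingWith (1/2 : NNReal) (fun x => y - t • w' x) := by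
        refine ⟨by rw [← NNReal.coe_lt_coe]; norm_num, LipschitzWith.of_dist_le_mul fun a b => ?_⟩
        rw [dist_eq_norm, dist_eq_norm]
        have := hap a b
        rw [show g a - g b - (a - b) = -((y - t • w' a) - (y - t • w' b)) by
          simp only [hg]; module, norm_neg] at this
        simpa using this
      haveI : CompleteSpace F := FiniteDimensional.complete ℝ F
      have h3 : y - t • w' (ContractingWith.fixedPoint _ hcontr)
          = ContractingWith.fixedPoint _ hcontr := hcontr.fixedPoint_isFixedPt
      refine ⟨ContractingWith.fixedPoint _ hcontr, ?_⟩
      have h4 : g (ContractingWith.fixedPoint _ hcontr) = ContractingWith.fixedPoint _ hcontr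
        + t • w' (ContractingWith.fixedPoint _ hcontr) := rfl
      rw [h4]
      exact (sub_eq_iff_eq_add.1 h3).symm
    have himg : g '' B = B := by
      have hgout : ∀ x, x ∉ B → g x = x := by
        intro x hx
        have : R < ‖x‖ := by simpa [hB] using hx
        simp [hg, hout x this]
      apply Subset.antisymm
      · rintro _ ⟨x, hx, rfl⟩
        by_contra hgx
        exact hgx (by have := hinj (hgout _ hgx); rw [this]; exact hx)
      · intro y hy
        obtain ⟨x, rfl⟩ := hsurj y
        refine ⟨x, ?_, rfl⟩
        by_contra hx
        exact hx (by rw [hgout x hx] at hy; exact hy)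
    have hder : ∀ x ∈ B, HasFDerivWithinAt g (ContinuousLinearMap.id ℝ F + t • A x) B x := by
      intro x hx
      have h1 : HasFDerivWithinAt (fun x => x + t • w x) (ContinuousLinearMap.id ℝ F + t • A x) B x :=
        ((hasFDerivAt_id x).add ((hwd x).const_smul t)).hasFDerivWithinAt
      refine h1.congr (fun y hy => ?_) ?_
      · simp only [hg]; rw [hin y (by simpa [hB] using hy)]
      · simp only [hg]; rw [hin x (by simpa [hB] using hx)]
    have hcv := integral_image_eq_integral_abs_det_fderiv_smul (volume : Measure F)
      hBc.measurableSet hder hinj.injOn (fun _ => (1 : ℝ))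
    rw [himg] at hcv
    simp only [integral_const, smul_eq_mul, mul_one, measureReal_restrict_apply_univ] at hcv
    rw [hcv]
    refine setIntegral_congr_fun hBc.measurableSet fun x hx => ?_
    refine (abs_of_pos (hεd ?_)).symm
    rw [dist_eq_norm, add_sub_cancel_left, norm_smul, Real.norm_of_nonneg ht]
    exact lt_of_le_of_lt (mul_le_mul_of_nonneg_left (hC x hx) ht) htε
  -- at `t = 1` the determinant vanishes
  have hp1 : p 1 = 0 := by
    have : ∀ x, (ContinuousLinearMap.id ℝ F + (1:ℝ) • A x).det = 0 := by
      intro x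
      have e1 : ContinuousLinearMap.id ℝ F + (1:ℝ) • A x = fderiv ℝ f x := by
        simp [hA]
      rw [e1]
      by_contra hne
      have hperp : ∀ v, inner ℝ (f x) (fderiv ℝ f x v) = 0 := by
        intro v
        have hd := ((hf.differentiable one_ne_zero) x).hasFDerivAt
        have h2 := hd.norm_sq
        have h3 : HasFDerivAt (fun x => ‖f x‖ ^ 2) (0 : F →L[ℝ] ℝ) x := by
          simp only [hn]; exact hasFDerivAt_const _ _
        have h4 := congrArg (fun L : F →L[ℝ] ℝ => L v) (h2.unique h3)
        simpa using h4
      have hs := (LinearMap.equivOfDetNeZero (fderiv ℝ f x : F →ₗ[ℝ] F) hne).surjective (f x)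
      obtain ⟨v, hv⟩ := hs
      have h5 := hperp v
      have hv' : fderiv ℝ f x v = f x := hv
      rw [hv', real_inner_self_eq_norm_sq, hn] at h5
      exact hR.ne' (by simpa using h5)
    simp only [hp, this, integral_zero]
  -- Lagrange interpolation
  set d := Module.finrank ℝ F
  set node : Fin (d + 1) → ℝ := fun i => t0 * (i : ℝ) / (d + 1) with hnode
  have hninj : Set.InjOn node (Finset.univ : Finset (Fin (d + 1))) := by
    intro i _ j _ hij
    simp only [hnode] at hij
    have hd : (0:ℝ) < d + 1 := by positivity
    rw [div_left_inj' hd.ne'] at hij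
    have := mul_left_cancel₀ ht0pos.ne' hij
    exact Fin.ext (by exact_mod_cast this)
  have hlag : ∀ x t, (ContinuousLinearMap.id ℝ F + t • A x).det
      = ∑ i : Fin (d+1), (ContinuousLinearMap.id ℝ F + node i • A x).det
        * (Lagrange.basis Finset.univ node i).eval t := by
    intro x t
    obtain ⟨P, hP, hPe⟩ := exists_poly_det (A x)
    have hdeg : P.degree < (Finset.univ : Finset (Fin (d + 1))).card := by
      refine lt_of_le_of_lt Polynomial.degree_le_natDegree ?_
      simp only [Finset.card_univ, Fintype.card_fin]
      exact_mod_cast Nat.lt_succ_of_le hP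
    have := Lagrange.eq_interpolate hninj hdeg
    rw [← hPe t]
    conv_lhs => rw [this]
    rw [Lagrange.interpolate_apply, Polynomial.eval_finsetSum]
    refine Finset.sum_congr rfl fun i _ => ?_
    rw [Polynomial.eval_mul, Polynomial.eval_C, hPe]
  have hsum1 : ∑ i : Fin (d+1), (Lagrange.basis Finset.univ node i).eval 1 = 1 := by
    rw [← Polynomial.eval_finsetSum, Lagrange.sum_basis hninj ⟨0, Finset.mem_univ _⟩]
    simp
  have hpl : p 1 = ∑ i : Fin (d+1), p (node i) * (Lagrange.basis Finset.univ node i).eval 1 := by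
    simp only [hp]
    rw [setIntegral_congr_fun hBc.measurableSet (fun x _ => hlag x 1), integral_finsetSum]
    · refine Finset.sum_congr rfl fun i _ => ?_
      rw [integral_mul_const]
    · intro i _
      exact ((hcont (node i)).mul continuous_const).continuousOn.integrableOn_compact hBc
  have hpn : ∀ i, p (node i) = volume.real B := by
    intro i
    apply hvol
    · simp only [hnode]; positivity
    · simp only [hnode]
      rw [div_le_iff₀ (by positivity)]
      have : (i : ℝ) ≤ d + 1 := by exact_mod_cast i.2.le
      gcongr
  simp only [hpn] at hpl
  rw [← Finset.mul_sum, hsum1, hp1, mul_one] at hpl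
  have hpos : 0 < volume.real B := by
    rw [measureReal_def]
    refine ENNReal.toReal_pos (Metric.measure_closedBall_pos volume (0:F) hR).ne' hBc.measure_ne_top
  linarith

lemma surj_of_eq_id_outside_aux (r : ℝ) (ψ : F → F) (hψ : Continuous ψ)
    (hid : ∀ x, r ≤ ‖x‖ → ψ x = x) : ∃ x, ψ x = 0 := by
  by_contra! hne
  letI : MeasurableSpace F := borel F
  haveI : BorelSpace F := ⟨rfl⟩
  have hu : Continuous fun x => ψ x - x := by fun_prop
  obtain ⟨g, hg, hgd, hgs⟩ := hu.exists_contDiff_approx 1 (ε := fun x => ‖ψ x‖) (by fun_prop)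
    (fun x => norm_pos_iff.2 (hne x))
  have hψ' : ∀ x, x + g x ≠ 0 := by
    intro x h0
    have := hgd x
    rw [dist_eq_norm, show g x - (ψ x - x) = (x + g x) - ψ x by abel, h0, zero_sub, norm_neg] at this
    exact lt_irrefl _ this
  have hg0 : ∀ x, r ≤ ‖x‖ → g x = 0 := by
    intro x hx
    by_contra h
    have := hgs (Function.mem_support.2 h)
    simp [hid x hx] at this
  set R := max r 1
  have hR : 0 < R := lt_of_lt_of_le one_pos (le_max_right _ _)
  have hg1 : ContDiff ℝ 1 g := by exact_mod_cast hg
  have hG : ContDiff ℝ 1 (fun x => x + g x) := contDiff_id.add hg1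
  refine no_retraction R hR (fun x => (R / ‖x + g x‖) • (x + g x)) ?_ ?_ ?_
  · exact (contDiff_const.div (hG.norm ℝ hψ') (fun x => norm_ne_zero_iff.2 (hψ' x))).smul hG
  · intro x
    have := norm_pos_iff.2 (hψ' x)
    rw [norm_smul, norm_div, norm_norm, Real.norm_of_nonneg hR.le]
    field_simp
  · intro x hx
    simp [hg0 x (by rw [hx]; exact le_max_left _ _), hx, hR.ne']
end

/-- A continuous self-map of a finite dimensional space which is the identity outside
a bounded set is onto. -/
lemma surj_of_eq_id_outside {F : Type*} [NormedAddCommGroup F] [NormedSpace ℝ F]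
    [FiniteDimensional ℝ F] (r : ℝ) (ψ : F → F) (hψ : Continuous ψ)
    (hid : ∀ x, r ≤ ‖x‖ → ψ x = x) (y : F) : ∃ x, ψ x = y := by
  let e := toEuclidean (E := F)
  let L : F →L[ℝ] EuclideanSpace ℝ (Fin (Module.finrank ℝ F)) := e
  obtain ⟨z, hz⟩ := surj_of_eq_id_outside_aux ((‖L‖ + 1) * (|r| + ‖y‖))
    (fun z => e (ψ (e.symm z + y) - y)) (by fun_prop) (by
      intro z hz
      have h1 : ‖z‖ ≤ (‖L‖ + 1) * ‖e.symm z‖ := by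
        have h5 : ‖L (e.symm z)‖ ≤ ‖L‖ * ‖e.symm z‖ := L.le_opNorm (e.symm z)
        have h6 : L (e.symm z) = z := e.apply_symm_apply z
        rw [h6] at h5
        nlinarith [norm_nonneg (e.symm z)]
      have h2 : r ≤ ‖e.symm z + y‖ := by
        have h0 : 0 < ‖L‖ + 1 := by positivity
        have h3 := le_of_mul_le_mul_left (hz.trans h1) h0
        have h4 : ‖e.symm z‖ ≤ ‖e.symm z + y‖ + ‖y‖ := by
          simpa using norm_sub_le (e.symm z + y) y
        linarith [le_abs_self r]
      rw [hid _ h2]; simp)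
  refine ⟨e.symm z + y, ?_⟩
  have := e.map_eq_zero_iff.1 hz
  exact sub_eq_zero.1 this


/-- Deformation lemma: explicit Euler steps along a descent field push `{f ≤ β}` below `α`. -/
lemma deformation {F : Type*} [NormedAddCommGroup F] [NormedSpace ℝ F]
    (f : F → ℝ) (hf : Continuous f) (f' : F → F →L[ℝ] ℝ) (G : F → F) (α β : ℝ) (hα : 0 < α)
    (hd : ∀ x, 0 < f x → HasFDerivAt f (f' x) x)
    (hf'c : ∀ x, 0 < f x → ContinuousAt f' x) (hGc : ∀ x, 0 < f x → ContinuousAt G x)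
    (hK : IsCompact {x | α / 2 ≤ f x})
    (hpos : ∀ x, α / 2 ≤ f x → f x ≤ β → 0 < f' x (G x)) :
    ∃ H : F → F, Continuous H ∧ (∀ x, f x ≤ 0 → H x = x) ∧ ∀ x, f x ≤ β → f (H x) < α := by
  set K := {x | α / 2 ≤ f x} ∩ {x | f x ≤ β} with hKdef
  have hKc : IsCompact K := hK.inter_right (isClosed_le hf continuous_const)
  have hKpos : ∀ x ∈ K, 0 < f x := fun x hx => lt_of_lt_of_le (by linarith) hx.1
  -- uniform lower bound
  obtain ⟨m, hm, hmK⟩ : ∃ m > 0, ∀ x ∈ K, m < f' x (G x) := by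
    rcases K.eq_empty_or_nonempty with h0 | h0
    · exact ⟨1, one_pos, by simp [h0]⟩
    · have hc : ContinuousOn (fun x => f' x (G x)) K := fun x hx =>
        ((hf'c x (hKpos x hx)).clm_apply (hGc x (hKpos x hx))).continuousWithinAt
      obtain ⟨x0, hx0, hmin⟩ := hKc.exists_isMinOn h0 hc
      have h1 := hpos x0 hx0.1 hx0.2
      exact ⟨f' x0 (G x0) / 2, by linarith, fun x hx => by
        have : f' x0 (G x0) ≤ f' x (G x) := hmin hx
        linarith⟩
  have hev : ∀ᶠ s in 𝓝 (0:ℝ), ∀ x ∈ K, 0 < f (x - s • G x) ∧ m < f' (x - s • G x) (G x) := by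
    refine hKc.eventually_forall_of_forall_eventually fun x hx => ?_
    have hGx := hGc x (hKpos x hx)
    have hG2 : ContinuousAt (fun z : ℝ × F => G z.2) (0, x) :=
      ContinuousAt.comp (f := fun z : ℝ × F => z.2) (g := G) hGx continuousAt_snd
    have hz : ContinuousAt (fun z : ℝ × F => z.2 - z.1 • G z.2) (0, x) :=
      continuousAt_snd.sub (continuousAt_fst.smul hG2)
    have h1 : ContinuousAt (fun z : ℝ × F => f (z.2 - z.1 • G z.2)) (0, x) :=
      hf.continuousAt.comp hz
    have h2 : ContinuousAt (fun z : ℝ × F => f' (z.2 - z.1 • G z.2)) (0, x) :=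
      ContinuousAt.comp (f := fun z : ℝ × F => z.2 - z.1 • G z.2) (g := f')
        (by simpa using hf'c x (hKpos x hx)) hz
    have h3 := h2.clm_apply hG2
    refine (h1.eventually (lt_mem_nhds ?_)).and (h3.eventually (lt_mem_nhds ?_))
    · simpa using hKpos x hx
    · simpa using hmK x hx
  obtain ⟨τ', hτ', hτ2⟩ := Metric.eventually_nhds_iff.1 hev
  set τ := τ' / 2 with hτdef
  have hτ : 0 < τ := by positivity
  have hstep : ∀ x ∈ K, ∀ s, 0 ≤ s → s ≤ τ → f (x - s • G x) ≤ f x - s * m := by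
    intro x hx s hs hsτ
    have hder : ∀ r ∈ Icc (0:ℝ) s, HasDerivAt (fun r => f (x - r • G x) + r * m)
        (f' (x - r • G x) (- G x) + m) r := by
      intro r hr
      have hr' := hτ2 (y := r) (by
        rw [Real.dist_eq, sub_zero, abs_of_nonneg hr.1]; linarith [hr.2]) x hx
      have h1 : HasDerivAt (fun r : ℝ => x - r • G x) (- G x) r := by
        have := ((hasDerivAt_id r).smul_const (G x)).const_sub x
        simpa using this
      have h2 := (hd _ hr'.1).comp_hasDerivAt r h1
      have h3 := (hasDerivAt_id r).mul_const m
      rw [one_mul] at h3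
      exact h2.add h3
    have hanti : AntitoneOn (fun r => f (x - r • G x) + r * m) (Icc 0 s) := by
      refine antitoneOn_of_deriv_nonpos (convex_Icc _ _)
        (fun r hr => (hder r hr).continuousAt.continuousWithinAt)
        (fun r hr => (hder r (interior_subset hr)).differentiableAt.differentiableWithinAt) ?_
      intro r hr
      have hr := interior_subset hr
      rw [(hder r hr).deriv, map_neg]
      have hr' := hτ2 (y := r) (by
        rw [Real.dist_eq, sub_zero, abs_of_nonneg hr.1]; linarith [hr.2]) x hx
      linarith [hr'.2]
    have := hanti (left_mem_Icc.2 hs) (right_mem_Icc.2 hs) hs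
    simp at this
    linarith
  set χ : ℝ → ℝ := fun s => max 0 (min 1 ((s - α / 2) / (α / 2))) with hχ
  have hχc : Continuous χ := by fun_prop
  have hχ0 : ∀ s, s ≤ α / 2 → χ s = 0 := by
    intro s hs
    have : (s - α / 2) / (α / 2) ≤ 0 := div_nonpos_of_nonpos_of_nonneg (by linarith) (by linarith)
    simp only [hχ]
    exact max_eq_left ((min_le_right _ _).trans this)
  have hχ1 : ∀ s, α ≤ s → χ s = 1 := by
    intro s hs
    have : 1 ≤ (s - α / 2) / (α / 2) := by rw [le_div_iff₀ (by linarith)]; linarith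
    simp only [hχ]
    rw [min_eq_left this]; simp
  have hχn : ∀ s, 0 ≤ χ s := fun s => le_max_left _ _
  have hχl : ∀ s, χ s ≤ 1 := fun s => max_le zero_le_one (min_le_left _ _)
  set S : F → F := fun x => x - (τ * χ (f x)) • G x with hS
  have hSid : ∀ x, f x ≤ α / 2 → S x = x := fun x hx => by simp [hS, hχ0 _ hx]
  have hSc : Continuous S := by
    rw [continuous_iff_continuousAt]
    intro x
    rcases lt_or_ge 0 (f x) with h | h
    · have hG := hGc x h
      have h1 : ContinuousAt (fun x => τ * χ (f x)) x := by
        have : Continuous fun x => τ * χ (f x) := by fun_prop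
        exact this.continuousAt
      exact continuousAt_id.sub (h1.smul hG)
    · have hnear : ∀ᶠ y in 𝓝 x, f y < α / 2 :=
        hf.continuousAt.eventually (gt_mem_nhds (by linarith))
      have : S =ᶠ[𝓝 x] id := hnear.mono fun y hy => hSid y hy.le
      exact continuousAt_id.congr this.symm
  have hSle : ∀ x, f x ≤ β → f (S x) ≤ f x := by
    intro x hx
    rcases le_or_gt (f x) (α / 2) with h | h
    · rw [hSid x h]
    · have := hstep x ⟨h.le, hx⟩ (τ * χ (f x)) (mul_nonneg hτ.le (hχn _))
        (mul_le_of_le_one_right hτ.le (hχl _))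
      have h2 := mul_nonneg (mul_nonneg hτ.le (hχn (f x))) hm.le
      simp only [hS]; linarith
  have hSlt : ∀ x, f x ≤ β → α ≤ f x → f (S x) ≤ f x - τ * m := by
    intro x hx hxa
    have := hstep x ⟨by show α / 2 ≤ f x; linarith, hx⟩ (τ * χ (f x)) (mul_nonneg hτ.le (hχn _))
        (mul_le_of_le_one_right hτ.le (hχl _))
    simp only [hS]
    rw [hχ1 _ hxa, mul_one] at this ⊢
    exact this
  have hiter : ∀ k : ℕ, ∀ x, f x ≤ β → f (S^[k] x) ≤ β ∧
      (f (S^[k] x) < α ∨ f (S^[k] x) ≤ β - k * (τ * m)) := by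
    intro k
    induction k with
    | zero => intro x hx; simp [hx]
    | succ k ih =>
      intro x hx
      obtain ⟨h1, h2⟩ := ih x hx
      rw [Function.iterate_succ_apply']
      have h3 := hSle _ h1
      refine ⟨h3.trans h1, ?_⟩
      rcases lt_or_ge (f (S^[k] x)) α with h4 | h4
      · exact Or.inl (lt_of_le_of_lt h3 h4)
      · right
        have h5 := hSlt _ h1 h4
        have h6 := h2.resolve_left (not_lt.2 h4)
        push_cast
        linarith
  obtain ⟨k, hk⟩ := exists_nat_gt ((β - α) / (τ * m))
  have hτm : 0 < τ * m := by positivity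
  rw [div_lt_iff₀ hτm] at hk
  refine ⟨S^[k], hSc.iterate k, fun x hx => ?_, fun x hx => ?_⟩
  · exact Function.iterate_fixed (hSid x (by linarith)) k
  · rcases (hiter k x hx).2 with h | h
    · exact h
    · linarith


/-- A bounded potential well with a repelling boundary, with the contact type inequality. -/
structure Well (E : Type*) [NormedAddCommGroup E] [InnerProductSpace ℝ E] where
  D : Set E
  w : E → ℝ
  gw : E → E
  X : E → E
  M : ℝ
  δ : ℝ
  L : ℝ
  R : ℝ
  x0 : E
  isOpen : IsOpen D
  bdd : ∀ x ∈ D, ‖x‖ < R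
  hw : ∀ x ∈ D, HasFDerivAt w (innerSL ℝ (gw x)) x
  gwc : ∀ x ∈ D, ContinuousAt gw x
  comp : ∀ s, IsCompact {x | x ∈ D ∧ w x ≤ s}
  Mpos : 0 < M
  wlow : ∀ x ∈ D, -M ≤ w x
  Lnn : 0 ≤ L
  XL : ∀ x ∈ D, ∀ y ∈ D, ‖X x - X y‖ ≤ L * ‖x - y‖
  δpos : 0 < δ
  contact : ∀ x ∈ D, δ + w x ≤ inner ℝ (gw x) (X x)
  x0mem : x0 ∈ D
  wx0 : w x0 < 0
  dd : E → ℝ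
  G : ℝ
  c : ℝ
  c2 : ℝ
  Gnn : 0 ≤ G
  cpos : 0 < c
  c2nn : 0 ≤ c2
  ddpos : ∀ x ∈ D, 0 < dd x
  ddL : ∀ x ∈ D, ∀ y ∈ D, |dd x - dd y| ≤ G * ‖x - y‖
  wge : ∀ x ∈ D, c / dd x ^ 4 - M ≤ w x
  wle : ∀ x ∈ D, w x ≤ c2 / dd x ^ 4

section discrete
variable {E : Type*} [NormedAddCommGroup E] [InnerProductSpace ℝ E]
variable {N : ℕ} [NeZero N]

/-- Discrete kinetic energy of a closed polygon. -/
noncomputable def KK (q : ZMod N → E) : ℝ := (N : ℝ) / 2 * ∑ i, ‖q (i + 1) - q i‖ ^ 2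

/-- Discrete mean of `-w`. -/
noncomputable def WW (w : E → ℝ) (q : ZMod N → E) : ℝ := -((1 / (N : ℝ)) * ∑ i, w (q i))

/-- Gradient of `KK * WW`. -/
noncomputable def GG (w : E → ℝ) (gw : E → E) (q : ZMod N → E) : ZMod N → E := fun i =>
  (WW w q * N) • ((2 : ℝ) • q i - q (i + 1) - q (i - 1)) - (KK q / N) • gw (q i)

open Classical in
/-- The truncated functional. -/
noncomputable def ff (P : Well E) (q : ZMod N → E) : ℝ :=
  if ∀ i, q i ∈ P.D then max 0 (KK q * WW P.w q) else 0

lemma Npos : (0 : ℝ) < N := by exact_mod_cast Nat.pos_of_ne_zero (NeZero.ne N)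

lemma KK_nonneg (q : ZMod N → E) : 0 ≤ KK q := by unfold KK; positivity

lemma sum_shift {A : Type*} [AddCommMonoid A] (g : ZMod N → A) :
    ∑ i, g (i + 1) = ∑ i, g i :=
  Equiv.sum_comp (Equiv.addRight (1 : ZMod N)) g

/-- Discrete Poincaré inequality. -/
lemma dist_le_KK (q : ZMod N → E) (j : ZMod N) (k : ℕ) (hk : k ≤ N) :
    ‖q (j + k) - q j‖ ^ 2 ≤ (k / N) * (2 * KK q) := by
  have h1 : ‖q (j + k) - q j‖ ≤ ∑ l ∈ Finset.range k, ‖q (j + l + 1) - q (j + l)‖ := by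
    have := Finset.sum_range_sub (fun l : ℕ => q (j + l)) k
    simp only [Nat.cast_zero, add_zero] at this
    rw [← this]
    refine (norm_sum_le _ _).trans (le_of_eq ?_)
    refine Finset.sum_congr rfl fun l _ => ?_
    push_cast
    rw [add_assoc]
  have h2 : (∑ l ∈ Finset.range k, ‖q (j + l + 1) - q (j + l)‖) ^ 2
      ≤ k * ∑ l ∈ Finset.range k, ‖q (j + l + 1) - q (j + l)‖ ^ 2 := by
    simpa using sq_sum_le_card_mul_sum_sq (s := Finset.range k)
      (f := fun l : ℕ => ‖q (j + l + 1) - q (j + l)‖)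
  have h3 : ∑ l ∈ Finset.range k, ‖q (j + l + 1) - q (j + l)‖ ^ 2
      ≤ ∑ i, ‖q (i + 1) - q i‖ ^ 2 := by
    have hinj : Set.InjOn (fun l : ℕ => j + (l : ZMod N)) (Finset.range k) := by
      intro a ha b hb hab
      have h5 : (a : ZMod N) = b := add_left_cancel hab
      have ha' : a < N := lt_of_lt_of_le (by simpa using ha) hk
      have hb' : b < N := lt_of_lt_of_le (by simpa using hb) hk
      have := congrArg ZMod.val h5
      rwa [ZMod.val_natCast_of_lt ha', ZMod.val_natCast_of_lt hb'] at this
    rw [← Finset.sum_image (f := fun i : ZMod N => ‖q (i + 1) - q i‖ ^ 2) hinj]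
    exact Finset.sum_le_sum_of_subset_of_nonneg (Finset.subset_univ _)
      (fun _ _ _ => by positivity)
  have hN := Npos (N := N)
  calc ‖q (j + k) - q j‖ ^ 2
      ≤ (∑ l ∈ Finset.range k, ‖q (j + l + 1) - q (j + l)‖) ^ 2 := by gcongr
    _ ≤ k * ∑ i, ‖q (i + 1) - q i‖ ^ 2 := h2.trans (by gcongr)
    _ = (k / N) * (2 * KK q) := by unfold KK; field_simp

lemma dist_le_KK' (q : ZMod N → E) (i : ZMod N) : ‖q i - q 0‖ ^ 2 ≤ 2 * KK q := by
  have h := dist_le_KK q 0 i.val (ZMod.val_lt i).le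
  simp only [zero_add, ZMod.natCast_zmod_val] at h
  have hN := Npos (N := N)
  have h2 : (i.val : ℝ) / N ≤ 1 := by
    rw [div_le_one hN]; exact_mod_cast (ZMod.val_lt i).le
  have := KK_nonneg q
  nlinarith

lemma continuous_KK : Continuous (KK : (ZMod N → E) → ℝ) := by unfold KK; fun_prop

lemma WW_le (P : Well E) (q : ZMod N → E) (hq : ∀ i, q i ∈ P.D) : WW P.w q ≤ P.M := by
  have hN := Npos (N := N)
  have h1 : ∑ i : ZMod N, (-P.M) ≤ ∑ i, P.w (q i) := Finset.sum_le_sum fun i _ => P.wlow _ (hq i)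
  simp only [Finset.sum_const, Finset.card_univ, ZMod.card, nsmul_eq_mul] at h1
  unfold WW
  rw [one_div_mul_eq_div, neg_le, le_div_iff₀ hN]
  linarith

/-- If `WW` is nonnegative no vertex is close to the boundary. -/
lemma WW_neg (P : Well E) (q : ZMod N → E) (hq : ∀ i, q i ∈ P.D) (i : ZMod N)
    (hi : N * P.M < P.w (q i)) : WW P.w q < 0 := by
  have hN := Npos (N := N)
  have h1 : ∑ j : ZMod N, (P.w (q j) + P.M) ≥ P.w (q i) + P.M :=
    Finset.single_le_sum (f := fun j => P.w (q j) + P.M)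
      (fun j _ => by linarith [P.wlow _ (hq j)]) (Finset.mem_univ i)
  rw [Finset.sum_add_distrib] at h1
  simp only [Finset.sum_const, Finset.card_univ, ZMod.card, nsmul_eq_mul] at h1
  unfold WW
  have : 0 < ∑ j, P.w (q j) := by linarith [P.Mpos]
  have : 0 < 1 / (N:ℝ) * ∑ j, P.w (q j) := by positivity
  linarith

lemma ff_of_mem (P : Well E) {q : ZMod N → E} (hq : ∀ i, q i ∈ P.D) :
    ff P q = max 0 (KK q * WW P.w q) := by unfold ff; rw [if_pos hq]

lemma ff_of_not (P : Well E) {q : ZMod N → E} (hq : ¬ ∀ i, q i ∈ P.D) :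
    ff P q = 0 := by unfold ff; rw [if_neg hq]

lemma ff_nonneg (P : Well E) (q : ZMod N → E) : 0 ≤ ff P q := by
  unfold ff; split_ifs <;> simp

lemma ff_pos (P : Well E) {q : ZMod N → E} (h : 0 < ff P q) :
    (∀ i, q i ∈ P.D) ∧ 0 < WW P.w q ∧ 0 < KK q ∧ ff P q = KK q * WW P.w q := by
  by_cases hq : ∀ i, q i ∈ P.D
  · rw [ff_of_mem P hq] at h ⊢
    have h1 : 0 < KK q * WW P.w q := by
      rcases lt_max_iff.1 h with h | h
      · exact absurd h (lt_irrefl _)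
      · exact h
    have hK := KK_nonneg q
    have h2 : 0 < KK q := lt_of_le_of_ne hK (fun h0 => by rw [← h0] at h1; simp at h1)
    exact ⟨hq, (pos_iff_pos_of_mul_pos h1).1 h2, h2, max_eq_right h1.le⟩
  · rw [ff_of_not P hq] at h; exact absurd h (lt_irrefl _)

lemma ff_zero_of_WW (P : Well E) {q : ZMod N → E} (h : WW P.w q ≤ 0) : ff P q = 0 := by
  refine le_antisymm (not_lt.1 fun h1 => ?_) (ff_nonneg P q)
  linarith [(ff_pos P h1).2.1]

lemma eventually_mem (P : Well E) {q : ZMod N → E} (hq : ∀ i, q i ∈ P.D) :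
    ∀ᶠ q' in 𝓝 q, ∀ i, q' i ∈ P.D :=
  eventually_all.2 fun i => (continuous_apply i).continuousAt.eventually (P.isOpen.mem_nhds (hq i))

lemma continuousAt_WW (P : Well E) {q : ZMod N → E} (hq : ∀ i, q i ∈ P.D) :
    ContinuousAt (WW P.w) q := by
  unfold WW
  have : ∀ i, ContinuousAt (fun q : ZMod N → E => P.w (q i)) q := fun i =>
    ContinuousAt.comp (f := fun q : ZMod N → E => q i) (g := P.w)
      (P.hw _ (hq i)).continuousAt (continuous_apply i).continuousAt
  exact (continuousAt_const.mul (tendsto_finsetSum _ fun i _ => this i)).neg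

lemma continuous_ff (P : Well E) : Continuous (ff P : (ZMod N → E) → ℝ) := by
  rw [continuous_iff_continuousAt]
  intro q
  by_cases hq : ∀ i, q i ∈ P.D
  · have h1 : ContinuousAt (fun q => max 0 (KK q * WW P.w q)) q :=
      continuousAt_const.max (continuous_KK.continuousAt.mul (continuousAt_WW P hq))
    exact h1.congr ((eventually_mem P hq).mono fun q' hq' => (ff_of_mem P hq').symm)
  · have hq' := hq
    push Not at hq
    obtain ⟨i, hi⟩ := hq
    have hcl : IsOpen {x | x ∈ P.D ∧ P.w x ≤ N * P.M}ᶜ := (P.comp _).isClosed.isOpen_compl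
    have h1 : ∀ᶠ q' in 𝓝 q, q' i ∈ {x | x ∈ P.D ∧ P.w x ≤ N * P.M}ᶜ :=
      (continuous_apply i).continuousAt.eventually (hcl.mem_nhds (by simp [hi]))
    refine (continuousAt_const (y := (0:ℝ))).congr (h1.mono fun q' h => ?_)
    by_cases hm : ∀ i, q' i ∈ P.D
    · have : N * P.M < P.w (q' i) := by
        by_contra hc
        exact h ⟨hm i, not_lt.1 hc⟩
      exact (ff_zero_of_WW P (WW_neg P q' hm i this).le).symm
    · exact (ff_of_not P hm).symm

lemma compact_ff (P : Well E) (a : ℝ) (ha : 0 < a) :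
    IsCompact {q : ZMod N → E | a ≤ ff P q} := by
  have h1 : IsCompact (Set.pi univ fun _ : ZMod N => {x | x ∈ P.D ∧ P.w x ≤ N * P.M}) :=
    isCompact_univ_pi fun _ => P.comp _
  refine h1.of_isClosed_subset (isClosed_le continuous_const (continuous_ff P)) ?_
  intro q hq i _
  obtain ⟨h2, h3, -, -⟩ := ff_pos P (lt_of_lt_of_le ha hq)
  refine ⟨h2 i, ?_⟩
  by_contra hc
  linarith [WW_neg P q h2 i (not_le.1 hc)]

/-- Summation by parts. -/
lemma sum_GG (w : E → ℝ) (gw : E → E) (q φ : ZMod N → E) :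
    ∑ i, inner ℝ (GG w gw q i) (φ i) =
      WW w q * N * ∑ i, inner ℝ (q (i + 1) - q i) (φ (i + 1) - φ i)
        - KK q / N * ∑ i, inner ℝ (gw (q i)) (φ i) := by
  have e1 : ∑ i, inner ℝ (q (i + 1) - q i) (φ (i + 1)) = ∑ i, inner ℝ (q i - q (i - 1)) (φ i) := by
    rw [← sum_shift (fun i => inner ℝ (q i - q (i - 1)) (φ i))]
    simp
  have e2 : ∑ i, inner ℝ (q (i + 1) - q i) (φ (i + 1) - φ i)
      = ∑ i, inner ℝ ((2 : ℝ) • q i - q (i + 1) - q (i - 1)) (φ i) := by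
    simp only [inner_sub_right]
    rw [Finset.sum_sub_distrib, e1, ← Finset.sum_sub_distrib]
    refine Finset.sum_congr rfl fun i _ => ?_
    rw [← inner_sub_left]
    congr 1
    module
  rw [e2, Finset.mul_sum, Finset.mul_sum, ← Finset.sum_sub_distrib]
  refine Finset.sum_congr rfl fun i _ => ?_
  simp only [GG, inner_sub_left, inner_smul_left, map_ofNat]
  simp

/-- The derivative of `KK * WW`. -/
noncomputable def dff (P : Well E) (q : ZMod N → E) : (ZMod N → E) →L[ℝ] ℝ :=
  ∑ i, (innerSL ℝ (GG P.w P.gw q i)).comp (ContinuousLinearMap.proj i)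

lemma dff_apply (P : Well E) (q φ : ZMod N → E) :
    dff P q φ = ∑ i, inner ℝ (GG P.w P.gw q i) (φ i) := by
  simp [dff]

lemma hasFDerivAt_KW (P : Well E) {q : ZMod N → E} (hq : ∀ i, q i ∈ P.D) :
    HasFDerivAt (fun q : ZMod N → E => KK q * WW P.w q) (dff P q) q := by
  have hN := Npos (N := N)
  have hp : ∀ i, HasFDerivAt (fun q : ZMod N → E => q i)
      (ContinuousLinearMap.proj (R := ℝ) (φ := fun _ : ZMod N => E) i) q := fun i =>
    (ContinuousLinearMap.proj (R := ℝ) (φ := fun _ : ZMod N => E) i).hasFDerivAt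
  have h1 := (HasFDerivAt.fun_sum (u := Finset.univ)
    fun i _ => ((hp (i + 1)).sub (hp i)).norm_sq).const_mul ((N:ℝ) / 2)
  have h2 := ((HasFDerivAt.fun_sum (u := Finset.univ)
    fun i _ => (P.hw _ (hq i)).comp q (hp i)).const_mul (1 / (N:ℝ))).neg
  have h3 := h1.mul h2
  refine (h3.congr_fderiv ?_ : _)
  ext φ
  rw [dff_apply, sum_GG]
  have eK : KK q = (N : ℝ) / 2 * ∑ i, ‖q (i + 1) - q i‖ ^ 2 := rfl
  have eW : WW P.w q = -((1 / (N : ℝ)) * ∑ i, P.w (q i)) := rfl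
  simp only [_root_.add_apply, _root_.smul_apply,
    _root_.neg_apply, _root_.sum_apply, smul_eq_mul,
    ContinuousLinearMap.comp_apply, _root_.sub_apply, ContinuousLinearMap.proj_apply,
    innerSL_apply_apply, nsmul_eq_mul, Pi.sub_apply, Pi.neg_apply,
    Function.comp_apply]
  rw [← Finset.mul_sum, ← eK, ← eW]
  push_cast
  field_simp
  ring

lemma eventually_ff (P : Well E) {q : ZMod N → E} (h : 0 < ff P q) :
    (ff P : (ZMod N → E) → ℝ) =ᶠ[𝓝 q] fun q => KK q * WW P.w q :=
  ((continuous_ff P).continuousAt.eventually (lt_mem_nhds h)).mono fun _ h' => (ff_pos P h').2.2.2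

lemma hasFDerivAt_ff (P : Well E) {q : ZMod N → E} (h : 0 < ff P q) :
    HasFDerivAt (ff P) (dff P q) q :=
  (hasFDerivAt_KW P (ff_pos P h).1).congr_of_eventuallyEq (eventually_ff P h)

lemma continuousAt_GG (P : Well E) {q : ZMod N → E} (hq : ∀ i, q i ∈ P.D) :
    ContinuousAt (GG P.w P.gw) q := by
  refine continuousAt_pi.2 fun i => ?_
  have h1 : ContinuousAt (fun q : ZMod N → E => P.gw (q i)) q :=
    ContinuousAt.comp (f := fun q : ZMod N → E => q i) (g := P.gw)
      (P.gwc _ (hq i)) (continuous_apply i).continuousAt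
  have h2 := continuousAt_WW P hq
  have h3 : ContinuousAt (KK : (ZMod N → E) → ℝ) q := continuous_KK.continuousAt
  have h4 : ContinuousAt (fun q : ZMod N → E => (2 : ℝ) • q i - q (i + 1) - q (i - 1)) q := by
    fun_prop
  exact ((h2.mul continuousAt_const).smul h4).sub ((h3.div_const _).smul h1)

lemma continuousAt_dff (P : Well E) {q : ZMod N → E} (hq : ∀ i, q i ∈ P.D) :
    ContinuousAt (dff P) q := by
  unfold dff
  refine tendsto_finsetSum _ fun i _ => ?_
  have h1 := continuousAt_pi.1 (continuousAt_GG P hq) i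
  have h2 : ContinuousAt (fun q : ZMod N → E => innerSL ℝ (GG P.w P.gw q i)) q :=
    (innerSL ℝ : E →L⋆[ℝ] E →L[ℝ] ℝ).continuous.continuousAt.comp h1
  exact h2.clm_comp continuousAt_const

lemma dff_GG (P : Well E) {q : ZMod N → E} (h : GG P.w P.gw q ≠ 0) :
    0 < dff P q (GG P.w P.gw q) := by
  rw [dff_apply]
  obtain ⟨i, hi⟩ := Function.ne_iff.1 h
  refine Finset.sum_pos' (fun i _ => real_inner_self_nonneg) ⟨i, Finset.mem_univ _, ?_⟩
  exact real_inner_self_pos.2 hi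

/-- The tent function on the cyclic group. -/
lemma tent_exists (hN : 2 ≤ N) : ∃ a : ZMod N → ℝ, a 0 = 0 ∧ (∀ i, 0 ≤ a i) ∧
    (∀ i, a i ≤ 1) ∧
    (∀ i, |a (i + 1) - a i| ≤ 1 / N) ∧ ∃ j, 1 / 4 ≤ a j := by
  have hNp := Npos (N := N)
  refine ⟨fun i => min (i.val : ℝ) (N - i.val) / N, ?_, ?_, ?_, ?_, ?_⟩
  · simp
  · intro i
    have : (i.val : ℝ) ≤ N := by exact_mod_cast (ZMod.val_lt i).le
    have : 0 ≤ min (i.val : ℝ) (N - i.val) := le_min (by positivity) (by linarith)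
    positivity
  · intro i
    have : (i.val : ℝ) ≤ N := by exact_mod_cast (ZMod.val_lt i).le
    dsimp only
    rw [div_le_one hNp]
    exact (min_le_left _ _).trans this
  · intro i
    dsimp only
    rw [← sub_div, abs_div, abs_of_pos hNp]
    gcongr
    have hv := ZMod.val_lt i
    have : Fact (1 < N) := ⟨by omega⟩
    by_cases h : i.val + 1 < N
    · have e : (i + 1).val = i.val + 1 := by
        rw [ZMod.val_add, ZMod.val_one, Nat.mod_eq_of_lt h]
      rw [e]
      push_cast
      refine (abs_min_sub_min_le_max _ _ _ _).trans ?_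
      refine max_le ?_ ?_
      · simp
      · rw [show (N : ℝ) - (i.val + 1) - (N - i.val) = -1 by ring]; simp
    · have hv' : i.val + 1 = N := by omega
      have e : (i + 1).val = 0 := by
        rw [ZMod.val_add, ZMod.val_one, hv', Nat.mod_self]
      have e2 : (i.val : ℝ) = N - 1 := by
        have : ((i.val + 1 : ℕ) : ℝ) = N := by rw [hv']
        push_cast at this; linarith
      rw [e, e2]
      have h2 : (2:ℝ) ≤ N := by exact_mod_cast hN
      simp only [CharP.cast_eq_zero, sub_zero, sub_sub_cancel]
      rw [min_eq_left hNp.le, min_eq_right (by linarith)]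
      simp
  · refine ⟨((N / 2 : ℕ) : ZMod N), ?_⟩
    dsimp only
    rw [ZMod.val_natCast_of_lt (by omega), le_div_iff₀ hNp]
    have h1 : N ≤ 4 * (N / 2) := by omega
    have h2 : 2 * (N / 2) ≤ N := by omega
    have h1' : (N : ℝ) ≤ 4 * ((N / 2 : ℕ) : ℝ) := by exact_mod_cast h1
    have h2' : 2 * ((N / 2 : ℕ) : ℝ) ≤ N := by exact_mod_cast h2
    exact le_min (by linarith) (by linarith)

end discrete

section linking
variable {E : Type*} [NormedAddCommGroup E] [InnerProductSpace ℝ E]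

lemma well_R_pos (P : Well E) : 0 < P.R := (norm_nonneg _).trans_lt (P.bdd _ P.x0mem)

lemma well_ball (P : Well E) : ∃ ρ u : ℝ, 0 < ρ ∧ 0 < u ∧
    ∀ x, ‖x - P.x0‖ ≤ ρ → x ∈ P.D ∧ P.w x ≤ -u := by
  have h1 : ∀ᶠ x in 𝓝 P.x0, P.w x < P.w P.x0 / 2 :=
    (P.hw _ P.x0mem).continuousAt.eventually (gt_mem_nhds (by linarith [P.wx0]))
  have h2 : ∀ᶠ x in 𝓝 P.x0, x ∈ P.D := P.isOpen.mem_nhds P.x0mem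
  obtain ⟨ε, hε, h⟩ := Metric.eventually_nhds_iff.1 (h1.and h2)
  refine ⟨ε / 2, -P.w P.x0 / 2, by linarith, by linarith [P.wx0], fun x hx => ?_⟩
  have := h (y := x) (by rw [dist_eq_norm]; linarith)
  exact ⟨this.2, by linarith [this.1]⟩

/-- The linking family. -/
noncomputable def io {N : ℕ} (a : ZMod N → ℝ) (v0 : E) (x : E × ℝ) : ZMod N → E :=
  fun i => x.1 + (x.2 * a i) • v0

lemma continuous_io {N : ℕ} (a : ZMod N → ℝ) (v0 : E) : Continuous (io a v0) := by
  unfold io; fun_prop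

lemma KK_io {N : ℕ} [NeZero N] (a : ZMod N → ℝ) (v0 : E) (x : E × ℝ) :
    KK (io a v0 x) = x.2 ^ 2 * KK (fun i => a i • v0) := by
  unfold KK io
  have : ∀ i : ZMod N, ‖x.1 + (x.2 * a (i + 1)) • v0 - (x.1 + (x.2 * a i) • v0)‖ ^ 2
      = x.2 ^ 2 * ‖a (i + 1) • v0 - a i • v0‖ ^ 2 := by
    intro i
    have : x.1 + (x.2 * a (i + 1)) • v0 - (x.1 + (x.2 * a i) • v0)
      = x.2 • (a (i + 1) • v0 - a i • v0) := by module
    rw [this, norm_smul, mul_pow]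
    simp
  simp only [this]
  rw [← Finset.mul_sum]
  ring

lemma critical_exists [FiniteDimensional ℝ E] [Nontrivial E] (P : Well E) :
    ∃ α β : ℝ, 0 < α ∧ 0 < β ∧ ∀ (N : ℕ) [NeZero N], 2 ≤ N →
      ∃ q : ZMod N → E, α ≤ ff P q ∧ ff P q ≤ β ∧ GG P.w P.gw q = 0 := by
  obtain ⟨ρ, u, hρ, hu, hball⟩ := well_ball P
  have hR := well_R_pos P
  have hM := P.Mpos
  set α : ℝ := ρ ^ 2 / 2 * u with hα
  have hαp : 0 < α := by positivity
  set β : ℝ := 32 * P.R ^ 2 * P.M with hβ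
  refine ⟨α / 2, β, by positivity, by positivity, fun N _ hN => ?_⟩
  by_contra hcon
  push Not at hcon
  obtain ⟨v0, hv0⟩ : ∃ v : E, ‖v‖ = 1 := exists_norm_eq E zero_le_one
  obtain ⟨a, a0, ann, a1, aL, j, hj⟩ := tent_exists hN
  have hNp := Npos (N := N)
  obtain ⟨H, Hc, Hid, Hlow⟩ := deformation (ff P : (ZMod N → E) → ℝ) (continuous_ff P)
    (dff P) (GG P.w P.gw) α β hαp (fun x hx => hasFDerivAt_ff P hx)
    (fun x hx => continuousAt_dff P (ff_pos P hx).1)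
    (fun x hx => continuousAt_GG P (ff_pos P hx).1)
    (compact_ff P _ (by positivity))
    (fun x h1 h2 => dff_GG P (hcon x h1 h2))
  set k0 : ℝ := KK (fun i => a i • v0) with hk0
  have k0pos : 0 < k0 := by
    have h1 := dist_le_KK' (fun i => a i • v0) j
    rw [a0, zero_smul, sub_zero, norm_smul, hv0, mul_one, Real.norm_eq_abs, sq_abs] at h1
    nlinarith
  have k0le : k0 ≤ 1 / 2 := by
    have h1 : ∀ i : ZMod N, ‖a (i + 1) • v0 - a i • v0‖ ^ 2 ≤ (1 / (N : ℝ)) ^ 2 := by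
      intro i
      rw [← sub_smul, norm_smul, hv0, mul_one]
      exact pow_le_pow_left₀ (norm_nonneg _) (aL i) 2
    have h2 := Finset.sum_le_sum fun (i : ZMod N) (_ : i ∈ Finset.univ) => h1 i
    simp only [Finset.sum_const, Finset.card_univ, ZMod.card, nsmul_eq_mul] at h2
    rw [hk0]; unfold KK
    calc _ ≤ (N : ℝ) / 2 * (N * (1 / N) ^ 2) := by gcongr
      _ = 1 / 2 := by field_simp
  have hmem : ∀ x : E × ℝ, 0 < ff P (io a v0 x) → ‖x‖ < 8 * P.R := by
    intro x hx
    have h1 := (ff_pos P hx).1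
    have h2 := P.bdd _ (h1 0)
    have h3 := P.bdd _ (h1 j)
    simp only [io, a0, mul_zero, zero_smul, add_zero] at h2 h3
    have h4 : ‖(x.2 * a j) • v0‖ ≤ ‖x.1 + (x.2 * a j) • v0‖ + ‖x.1‖ := by
      have := norm_sub_le (x.1 + (x.2 * a j) • v0) x.1
      rwa [add_sub_cancel_left] at this
    rw [norm_smul, hv0, mul_one, norm_mul, Real.norm_eq_abs (a j), abs_of_nonneg (ann j)] at h4
    have h5 : ‖x.2‖ * (1 / 4) ≤ ‖x.2‖ * a j := by gcongr
    rw [Prod.norm_def]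
    exact max_lt (by linarith) (by linarith)
  have hbeta : ∀ x : E × ℝ, ff P (io a v0 x) ≤ β := by
    intro x
    rcases (ff_nonneg P (io a v0 x)).eq_or_lt with h | h
    · rw [← h]; positivity
    · have h1 := hmem x h
      obtain ⟨h2, h3, h4, h5⟩ := ff_pos P h
      have h6 := WW_le P _ h2
      have h7 : |x.2| ≤ 8 * P.R := (norm_snd_le x).trans h1.le
      have h8 : x.2 ^ 2 ≤ (8 * P.R) ^ 2 := by rw [← sq_abs]; gcongr
      rw [h5, KK_io]
      calc x.2 ^ 2 * k0 * WW P.w (io a v0 x) ≤ (8 * P.R) ^ 2 * (1 / 2) * P.M := by gcongr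
        _ = β := by rw [hβ]; ring
  set κ : ℝ := √(2 * k0) with hκ
  have κpos : 0 < κ := Real.sqrt_pos.2 (by positivity)
  let Q : E × ℝ → E × ℝ := fun x =>
    (H (io a v0 x) 0, √(2 * KK (H (io a v0 x))) / κ)
  have hQc : Continuous Q := by
    have h1 : Continuous fun x => H (io a v0 x) := Hc.comp (continuous_io a v0)
    have h2 : Continuous fun x => KK (H (io a v0 x)) := continuous_KK.comp h1
    have h3 : Continuous fun x => H (io a v0 x) 0 := (continuous_apply 0).comp h1
    exact h3.prodMk ((continuous_const.mul h2).sqrt.div_const _)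
  have hQid : ∀ x : E × ℝ, 0 ≤ x.2 → ff P (io a v0 x) ≤ 0 → Q x = x := by
    intro x hx h
    have h1 := Hid _ h
    simp only [Q, h1, KK_io]
    rw [show 2 * (x.2 ^ 2 * KK (fun i => a i • v0)) = x.2 ^ 2 * (2 * k0) by rw [hk0]; ring,
      Real.sqrt_mul (by positivity), Real.sqrt_sq hx, ← hκ, mul_div_assoc, div_self κpos.ne',
      mul_one]
    simp [io, a0]
  let ψ : E × ℝ → E × ℝ := fun x => if 0 ≤ x.2 then Q x else x
  have hψc : Continuous ψ := by
    refine Continuous.if_le hQc continuous_id continuous_const continuous_snd ?_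
    intro x hx
    refine hQid x hx.le ?_
    refine not_lt.1 fun h => ?_
    have := (ff_pos P h).2.2.1
    rw [KK_io, ← hx] at this
    simp at this
  have hψid : ∀ x, 8 * P.R ≤ ‖x‖ → ψ x = x := by
    intro x hx
    by_cases h0 : 0 ≤ x.2
    · simp only [ψ, if_pos h0]
      exact hQid x h0 (not_lt.1 fun h => absurd (hmem x h) (not_lt.2 hx))
    · simp only [ψ, if_neg h0]
  obtain ⟨x, hx⟩ := surj_of_eq_id_outside _ ψ hψc hψid (P.x0, ρ / κ)
  have hρκ : 0 < ρ / κ := by positivity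
  by_cases h0 : 0 ≤ x.2
  · simp only [ψ, if_pos h0, Q, Prod.mk.injEq] at hx
    obtain ⟨h1, h2⟩ := hx
    set y := H (io a v0 x) with hy
    have h3 : √(2 * KK y) = ρ := by
      have := (div_left_inj' κpos.ne').1 h2
      exact this
    have h4 : 2 * KK y = ρ ^ 2 := by
      rw [← h3, Real.sq_sqrt (by linarith [KK_nonneg y])]
    have h5 : ∀ i, y i ∈ P.D ∧ P.w (y i) ≤ -u := by
      intro i
      refine hball _ ?_
      have := dist_le_KK' y i
      rw [h4, h1] at this
      exact (sq_le_sq₀ (norm_nonneg _) hρ.le).1 this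
    have h6 : u ≤ WW P.w y := by
      have h1 := Finset.sum_le_sum fun (i : ZMod N) (_ : i ∈ Finset.univ) => (h5 i).2
      simp only [Finset.sum_const, Finset.card_univ, ZMod.card, nsmul_eq_mul] at h1
      unfold WW
      rw [one_div_mul_eq_div, le_neg, div_le_iff₀ hNp]
      linarith
    have h7 := Hlow _ (hbeta x)
    rw [← hy, ff_of_mem P (fun i => (h5 i).1)] at h7
    have h8 : KK y * WW P.w y < α := (le_max_right _ _).trans_lt h7
    have h9 : KK y * u ≤ KK y * WW P.w y := mul_le_mul_of_nonneg_left h6 (KK_nonneg y)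
    have : KK y = ρ ^ 2 / 2 := by linarith
    rw [this] at h8 h9
    linarith
  · simp only [ψ, if_neg h0] at hx
    rw [hx] at h0
    exact h0 hρκ.le

end linking

section bounds
variable {E : Type*} [NormedAddCommGroup E] [InnerProductSpace ℝ E]

lemma sum_w (P : Well E) {N : ℕ} [NeZero N] (q : ZMod N → E) :
    ∑ i, P.w (q i) = -(N * WW P.w q) := by
  have hN := Npos (N := N)
  unfold WW; field_simp

lemma K_bound (P : Well E) {β : ℝ} {N : ℕ} [NeZero N] (q : ZMod N → E)
    (h0 : 0 < ff P q) (h1 : ff P q ≤ β) (hG : GG P.w P.gw q = 0) :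
    KK q ≤ (2 * P.L + 1) * β / P.δ := by
  have hN := Npos (N := N)
  have hδ := P.δpos
  obtain ⟨hD, hW, hK, hf⟩ := ff_pos P h0
  have h2 := sum_GG P.w P.gw q (fun i => P.X (q i))
  rw [hG] at h2
  simp only [Pi.zero_apply, inner_zero_left, Finset.sum_const_zero] at h2
  have h3 : N * P.δ - N * WW P.w q ≤ ∑ i, inner ℝ (P.gw (q i)) (P.X (q i)) := by
    have := Finset.sum_le_sum fun (i : ZMod N) (_ : i ∈ Finset.univ) => P.contact _ (hD i)
    rw [Finset.sum_add_distrib, sum_w] at this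
    simp only [Finset.sum_const, Finset.card_univ, ZMod.card, nsmul_eq_mul] at this
    linarith
  have h4 : ∑ i, inner ℝ (q (i + 1) - q i) (P.X (q (i + 1)) - P.X (q i))
      ≤ P.L * ∑ i, ‖q (i + 1) - q i‖ ^ 2 := by
    rw [Finset.mul_sum]
    refine Finset.sum_le_sum fun i _ => (real_inner_le_norm _ _).trans ?_
    have := P.XL _ (hD (i + 1)) _ (hD i)
    calc _ ≤ ‖q (i + 1) - q i‖ * (P.L * ‖q (i + 1) - q i‖) := by gcongr
      _ = _ := by ring
  have h5 : WW P.w q * N * ∑ i, inner ℝ (q (i + 1) - q i) (P.X (q (i + 1)) - P.X (q i))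
      ≤ 2 * P.L * (KK q * WW P.w q) := by
    calc _ ≤ WW P.w q * N * (P.L * ∑ i, ‖q (i + 1) - q i‖ ^ 2) := by gcongr
      _ = _ := by unfold KK; ring
  have h6 : KK q / N * (N * P.δ - N * WW P.w q)
      ≤ KK q / N * ∑ i, inner ℝ (P.gw (q i)) (P.X (q i)) := by gcongr
  have h7 : KK q / N * (N * P.δ - N * WW P.w q) = KK q * P.δ - KK q * WW P.w q := by
    field_simp
  rw [le_div_iff₀ hδ]
  have hL := P.Lnn
  nlinarith

lemma dd_bound (P : Well E) {K : ℝ} (hK : 0 ≤ K) : ∃ d0 : ℝ, 0 < d0 ∧ ∀ (N : ℕ) [NeZero N]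
    (q : ZMod N → E), (∀ i, q i ∈ P.D) → 0 ≤ WW P.w q → KK q ≤ K → ∀ i, d0 ≤ P.dd (q i) := by
  have hc := P.cpos
  have hM := P.Mpos
  have hG := P.Gnn
  set B : ℝ := 1 + P.G * √(2 * K) with hB
  have hBp : 0 < B := by positivity
  refine ⟨min 1 √(P.c / (P.M * B ^ 4)), by positivity, fun N _ q hD hW hKq i => ?_⟩
  have hN := Npos (N := N)
  set d := P.dd (q i) with hd
  have hdp : 0 < d := P.ddpos _ (hD i)
  by_cases hd1 : 1 ≤ d
  · exact (min_le_left _ _).trans hd1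
  push Not at hd1
  refine (min_le_right _ _).trans ?_
  rw [Real.sqrt_le_left hdp.le]
  set k0 := ⌊d ^ 2 * N⌋₊ with hk0
  have hk0N : k0 + 1 ≤ N := by
    have : k0 < N := by
      rw [hk0, Nat.floor_lt (by positivity)]
      have : d ^ 2 < 1 := by nlinarith
      nlinarith
    omega
  have hk0g : d ^ 2 * N ≤ ((k0 + 1 : ℕ) : ℝ) := by
    push_cast; exact (Nat.lt_floor_add_one _).le
  have hinj : Set.InjOn (fun l : ℕ => i + (l : ZMod N)) (Finset.range (k0 + 1)) := by
    intro a ha b hb hab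
    have h5 : (a : ZMod N) = b := add_left_cancel hab
    have ha' : a < N := lt_of_lt_of_le (by simpa using ha) hk0N
    have hb' : b < N := lt_of_lt_of_le (by simpa using hb) hk0N
    have := congrArg ZMod.val h5
    rwa [ZMod.val_natCast_of_lt ha', ZMod.val_natCast_of_lt hb'] at this
  have h1 : ∀ l ∈ Finset.range (k0 + 1), P.c / (d * B) ^ 4 ≤ P.w (q (i + l)) + P.M := by
    intro l hl
    have hl' : l ≤ k0 := by have := Finset.mem_range.1 hl; omega
    have h2 := dist_le_KK q i l (by omega)
    have h3 : (l : ℝ) / N ≤ d ^ 2 := by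
      rw [div_le_iff₀ hN]
      calc (l : ℝ) ≤ k0 := by exact_mod_cast hl'
        _ ≤ _ := Nat.floor_le (by positivity)
    have h4 : ‖q (i + l) - q i‖ ≤ d * √(2 * K) := by
      refine abs_le_of_sq_le_sq' ?_ (by positivity) |>.2
      rw [mul_pow, Real.sq_sqrt (by positivity)]
      have := KK_nonneg q
      calc _ ≤ _ := h2
        _ ≤ d ^ 2 * (2 * K) := by gcongr
    have h5 := (le_abs_self _).trans (P.ddL _ (hD (i + l)) _ (hD i))
    have h6 : P.dd (q (i + l)) ≤ d * B := by
      have : P.G * ‖q (i + l) - q i‖ ≤ P.G * (d * √(2 * K)) := by gcongr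
      rw [hB]
      linarith
    have h7 := P.ddpos _ (hD (i + l))
    have h8 := P.wge _ (hD (i + l))
    have h9 : P.c / (d * B) ^ 4 ≤ P.c / P.dd (q (i + l)) ^ 4 := by gcongr
    linarith
  have h2 := Finset.sum_le_sum h1
  rw [← Finset.sum_image (f := fun i : ZMod N => P.w (q i) + P.M) hinj] at h2
  have h3 : ∑ j ∈ Finset.image (fun l : ℕ => i + (l : ZMod N)) (Finset.range (k0 + 1)),
      (P.w (q j) + P.M) ≤ ∑ j, (P.w (q j) + P.M) :=
    Finset.sum_le_sum_of_subset_of_nonneg (Finset.subset_univ _)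
      (fun j _ _ => by linarith [P.wlow _ (hD j)])
  have h4 : ∑ j, (P.w (q j) + P.M) ≤ N * P.M := by
    rw [Finset.sum_add_distrib, sum_w]
    simp only [Finset.sum_const, Finset.card_univ, ZMod.card, nsmul_eq_mul]
    nlinarith
  rw [Finset.sum_const, Finset.card_range, nsmul_eq_mul] at h2
  have h5 : d ^ 2 * N * (P.c / (d * B) ^ 4) ≤ N * P.M :=
    (mul_le_mul_of_nonneg_right hk0g (by positivity)).trans (h2.trans (h3.trans h4))
  have h6 : d ^ 2 * N * (P.c / (d * B) ^ 4) = N * (P.c / (d ^ 2 * B ^ 4)) := by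
    field_simp
  rw [h6] at h5
  have h7 := le_of_mul_le_mul_left h5 hN
  rw [div_le_iff₀ (by positivity)] at h7 ⊢
  linarith

/-- Uniform family of discrete solutions. -/
lemma discrete_family [FiniteDimensional ℝ E] [Nontrivial E] (P : Well E) :
    ∃ s K l0 l1 : ℝ, 0 < l0 ∧ 0 ≤ K ∧ ∀ (N : ℕ) [NeZero N], 2 ≤ N →
      ∃ (q : ZMod N → E) (l : ℝ), l0 ≤ l ∧ l ≤ l1 ∧ (∀ i, q i ∈ P.D ∧ P.w (q i) ≤ s) ∧
        KK q ≤ K ∧ KK q = l * WW P.w q ∧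
        ∀ i, (N : ℝ) • (q (i + 1) - q i) - (N : ℝ) • (q i - q (i - 1))
          = -((l / N) • P.gw (q i)) := by
  obtain ⟨α, β, hα, hβ, hcrit⟩ := critical_exists P
  have hδ := P.δpos
  have hM := P.Mpos
  have hL := P.Lnn
  set K : ℝ := (2 * P.L + 1) * β / P.δ with hKdef
  have hK0 : 0 < K := by positivity
  obtain ⟨d0, hd0, hdd⟩ := dd_bound P hK0.le
  refine ⟨P.c2 / d0 ^ 4, K, α / P.M / P.M, K / (α / K), by positivity, hK0.le,
    fun N _ hN2 => ?_⟩
  obtain ⟨q, h1, h2, h3⟩ := hcrit N hN2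
  have hN := Npos (N := N)
  have h0 : 0 < ff P q := hα.trans_le h1
  obtain ⟨hD, hW, hK, hf⟩ := ff_pos P h0
  have hKK := K_bound P q h0 h2 h3
  have hWM := WW_le P q hD
  rw [hf] at h1
  have hKα : α / P.M ≤ KK q := by
    rw [div_le_iff₀ hM]; nlinarith
  have hWα : α / K ≤ WW P.w q := by
    rw [div_le_iff₀ hK0]; nlinarith
  refine ⟨q, KK q / WW P.w q, ?_, ?_, ?_, hKK, by field_simp, ?_⟩
  · gcongr
  · gcongr
  · intro i
    refine ⟨hD i, (P.wle _ (hD i)).trans ?_⟩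
    have := hdd N q hD hW.le hKK i
    have := P.c2nn
    gcongr
  · intro i
    have h4 := congrFun h3 i
    simp only [GG, Pi.zero_apply] at h4
    have h5 := congrArg (fun x => (1 / WW P.w q) • x) (sub_eq_zero.1 h4)
    simp only [smul_smul] at h5
    have e1 : 1 / WW P.w q * (WW P.w q * N) = N := by field_simp
    have e2 : 1 / WW P.w q * (KK q / N) = KK q / WW P.w q / N := by field_simp
    rw [e1, e2] at h5
    rw [← h5]
    module

end bounds

section limit
variable {E : Type*} [NormedAddCommGroup E] [InnerProductSpace ℝ E]

/-- Telescoping estimate. -/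
lemma telescope (f : ℤ → E) (g : E) (c B : ℝ) (i : ℤ) (m : ℕ)
    (h : ∀ k : ℕ, k < m → ‖f (i + k + 1) - f (i + k) - c • g‖ ≤ B) :
    ‖f (i + m) - f i - (m * c) • g‖ ≤ m * B := by
  induction m with
  | zero => simp
  | succ m ih =>
    have h1 := ih fun k hk => h k (by omega)
    have h2 := h m (by omega)
    have e : f (i + (m + 1 : ℕ)) - f i - (((m + 1 : ℕ) : ℝ) * c) • g
        = (f (i + m) - f i - (m * c) • g) + (f (i + m + 1) - f (i + m) - c • g) := by
      push_cast
      rw [← add_assoc]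
      module
    rw [e]
    refine (norm_add_le _ _).trans ?_
    push_cast
    linarith

/-- One sided uniform differentiability and continuity of the derivative. -/
lemma hasDerivAt_of_right (f g : ℝ → E) (hg : Continuous g)
    (h : ∀ ε > 0, ∃ δ > 0, ∀ s t, s ≤ t → t - s < δ → ‖f t - f s - (t - s) • g s‖ ≤ ε * (t - s))
    (s : ℝ) : HasDerivAt f (g s) s := by
  rw [hasDerivAt_iff_isLittleO, Asymptotics.isLittleO_iff]
  intro ε hε
  obtain ⟨δ, hδ, hh⟩ := h (ε / 2) (by positivity)
  obtain ⟨δ', hδ', hg'⟩ := Metric.continuous_iff.1 hg s (ε / 2) (by positivity)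
  rw [Metric.eventually_nhds_iff]
  refine ⟨min δ δ', lt_min hδ hδ', fun t ht => ?_⟩
  rw [Real.dist_eq] at ht
  have ht1 := ht.trans_le (min_le_left _ _)
  have ht2 := ht.trans_le (min_le_right _ _)
  rw [Real.norm_eq_abs]
  rcases le_total s t with hst | hst
  · rw [abs_of_nonneg (sub_nonneg.2 hst)] at ht1 ⊢
    have := hh s t hst ht1
    nlinarith
  · rw [abs_of_nonpos (sub_nonpos.2 hst)] at ht1 ⊢
    have h1 := hh t s hst (by linarith)
    have h2 := hg' t (by rw [Real.dist_eq]; exact ht2)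
    rw [dist_eq_norm] at h2
    have e : f t - f s - (t - s) • g s
        = -(f s - f t - (s - t) • g t) - (s - t) • (g t - g s) := by module
    rw [e]
    refine (norm_sub_le _ _).trans ?_
    rw [norm_neg, norm_smul, Real.norm_eq_abs, abs_of_nonneg (sub_nonneg.2 hst)]
    have : (s - t) * ‖g t - g s‖ ≤ (s - t) * (ε / 2) :=
      mul_le_mul_of_nonneg_left h2.le (sub_nonneg.2 hst)
    linarith

lemma floor_tendsto (t : ℝ) : Tendsto (fun n : ℕ => (⌊t * (n + 2 : ℕ)⌋ : ℝ) / (n + 2 : ℕ))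
    atTop (𝓝 t) := by
  have h1 : Tendsto (fun n : ℕ => ((n + 2 : ℕ) : ℝ)) atTop atTop :=
    tendsto_natCast_atTop_atTop.comp (tendsto_add_atTop_nat 2)
  have h2 : Tendsto (fun n : ℕ => t - 1 / ((n + 2 : ℕ) : ℝ)) atTop (𝓝 t) := by
    have := (tendsto_const_nhds (x := t) (f := (atTop : Filter ℕ))).sub
      ((tendsto_const_nhds (x := (1:ℝ))).div_atTop h1)
    simpa using this
  refine tendsto_of_tendsto_of_tendsto_of_le_of_le h2 tendsto_const_nhds ?_ ?_
  · intro n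
    have hn : (0:ℝ) < (n + 2 : ℕ) := by positivity
    dsimp only
    rw [le_div_iff₀ hn, sub_mul, one_div_mul_cancel hn.ne']
    exact (Int.sub_one_lt_floor _).le
  · intro n
    have hn : (0:ℝ) < (n + 2 : ℕ) := by positivity
    dsimp only
    rw [div_le_iff₀ hn]
    exact Int.floor_le _

/-- Passing to the limit in a one sided discrete estimate. -/
lemma transfer (U : Filter ℕ) [U.NeBot] (hU : U ≤ atTop) (f g : ℕ → ℤ → E) (F G : ℝ → E)
    (hF : ∀ t : ℝ, Tendsto (fun n => f n ⌊t * (n + 2 : ℕ)⌋) U (𝓝 (F t)))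
    (hG : ∀ t : ℝ, Tendsto (fun n => g n ⌊t * (n + 2 : ℕ)⌋) U (𝓝 (G t)))
    (ε δ : ℝ)
    (h : ∀ n (i : ℤ) (m : ℕ), (m : ℝ) / (n + 2 : ℕ) < δ →
      ‖f n (i + m) - f n i - ((m : ℝ) / (n + 2 : ℕ)) • g n i‖ ≤ ε * ((m : ℝ) / (n + 2 : ℕ)))
    (s t : ℝ) (hst : s ≤ t) (hδ : t - s < δ) :
    ‖F t - F s - (t - s) • G s‖ ≤ ε * (t - s) := by
  have h1 : Tendsto (fun n : ℕ => (⌊t * (n + 2 : ℕ)⌋ : ℝ) / (n + 2 : ℕ)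
      - (⌊s * (n + 2 : ℕ)⌋ : ℝ) / (n + 2 : ℕ)) U (𝓝 (t - s)) :=
    ((floor_tendsto t).sub (floor_tendsto s)).mono_left hU
  have h2 := (((hF t).sub (hF s)).sub (h1.smul (hG s))).norm
  have h3 := h1.const_mul ε
  refine le_of_tendsto_of_tendsto h2 h3 ?_
  filter_upwards [h1.eventually (gt_mem_nhds hδ)] with n hn
  have hle : ⌊s * (n + 2 : ℕ)⌋ ≤ ⌊t * (n + 2 : ℕ)⌋ := Int.floor_le_floor (by gcongr)
  obtain ⟨m, hm⟩ := Int.eq_ofNat_of_zero_le (sub_nonneg.2 hle)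
  have e1 : ⌊t * (n + 2 : ℕ)⌋ = ⌊s * (n + 2 : ℕ)⌋ + m := by omega
  have e2 : (⌊t * (n + 2 : ℕ)⌋ : ℝ) / (n + 2 : ℕ) - (⌊s * (n + 2 : ℕ)⌋ : ℝ) / (n + 2 : ℕ)
      = (m : ℝ) / (n + 2 : ℕ) := by
    rw [e1]; push_cast; ring
  rw [e2] at hn ⊢
  rw [e1]
  exact h n _ m hn

/-- A uniformly Lipschitz family has the same limits along nearby indices. -/
lemma lip_index (U : Filter ℕ) (hU : U ≤ atTop) (f : ℕ → ℤ → E) (A : ℝ)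
    (hf : ∀ n (i : ℤ) (m : ℕ), ‖f n (i + m) - f n i‖ ≤ A * ((m : ℝ) / (n + 2 : ℕ)))
    (t : ℝ) (x : E) (hx : Tendsto (fun n => f n ⌊t * (n + 2 : ℕ)⌋) U (𝓝 x)) (j : ℕ → ℤ)
    (hj : Tendsto (fun n : ℕ => (j n : ℝ) / (n + 2 : ℕ)) U (𝓝 t)) :
    Tendsto (fun n => f n (j n)) U (𝓝 x) := by
  have h0 : ∀ n (i k : ℤ), ‖f n k - f n i‖
      ≤ A * |(k : ℝ) / (n + 2 : ℕ) - (i : ℝ) / (n + 2 : ℕ)| := by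
    intro n
    have : ∀ i k : ℤ, i ≤ k → ‖f n k - f n i‖
        ≤ A * |(k : ℝ) / (n + 2 : ℕ) - (i : ℝ) / (n + 2 : ℕ)| := by
      intro i k hik
      obtain ⟨m, hm⟩ := Int.eq_ofNat_of_zero_le (sub_nonneg.2 hik)
      have e1 : k = i + m := by omega
      have := hf n i m
      rw [e1, ← sub_div]
      push_cast
      rw [add_sub_cancel_left, abs_of_nonneg (by positivity)]
      exact_mod_cast this
    intro i k
    rcases le_total i k with h | h
    · exact this i k h
    · rw [norm_sub_rev, abs_sub_comm]; exact this k i h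
  have h1 : Tendsto (fun n : ℕ => (j n : ℝ) / (n + 2 : ℕ)
      - (⌊t * (n + 2 : ℕ)⌋ : ℝ) / (n + 2 : ℕ)) U (𝓝 0) := by
    simpa using hj.sub ((floor_tendsto t).mono_left hU)
  have h2 : Tendsto (fun n => f n (j n) - f n ⌊t * (n + 2 : ℕ)⌋) U (𝓝 0) := by
    refine squeeze_zero_norm (fun n => h0 n _ _) ?_
    simpa using h1.abs.const_mul A
  simpa using h2.add hx

lemma ultra_limit (U : Ultrafilter ℕ) {X : Type*} [TopologicalSpace X] {C : Set X}
    (hC : IsCompact C) (f : ℕ → X) (hf : ∀ n, f n ∈ C) :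
    ∃ x ∈ C, Tendsto f U (𝓝 x) := by
  have := hC.ultrafilter_le_nhds (U.map f) (by
    rw [le_principal_iff]
    exact Ultrafilter.mem_map.2 (Filter.univ_mem' hf))
  simpa [Tendsto] using this

theorem limit_orbit {C : Set E} (hC : IsCompact C) (w : E → ℝ) (gw : E → E)
    [FiniteDimensional ℝ E]
    (hw : ContinuousOn w C) (hgw : ContinuousOn gw C) (l0 l1 B : ℝ) (hl0 : 0 < l0)
    (x p : ℕ → ℤ → E) (l : ℕ → ℝ) (hl : ∀ n, l n ∈ Set.Icc l0 l1)
    (hx : ∀ n k, x n k ∈ C) (hp : ∀ n k, ‖p n k‖ ≤ B)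
    (hxs : ∀ n k, x n (k + 1) - x n k = (1 / ((n + 2 : ℕ) : ℝ)) • p n k)
    (hps : ∀ n k, p n (k + 1) - p n k = -((l n / ((n + 2 : ℕ) : ℝ)) • gw (x n (k + 1))))
    (hper : ∀ n k, x n (k + (n + 2 : ℕ)) = x n k)
    (hneg : ∀ n, ∃ i : ℕ, i < n + 2 ∧ ‖p n i‖ ^ 2 / 2 + l n * w (x n i) ≤ 0)
    (hpos : ∀ n, ∃ i : ℕ, i < n + 2 ∧ 0 ≤ ‖p n i‖ ^ 2 / 2 + l n * w (x n i)) :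
    ∃ (q v : ℝ → E) (k : ℝ), 0 < k ∧ (∀ t, q t ∈ C) ∧ (∀ t, HasDerivAt q (v t) t) ∧
      (∀ t, HasDerivAt v (-(k • gw (q t))) t) ∧ (∀ t, q (t + 1) = q t) ∧
      (∃ t, ‖v t‖ ^ 2 / 2 + k * w (q t) ≤ 0) ∧ ∃ t, 0 ≤ ‖v t‖ ^ 2 / 2 + k * w (q t) := by
  let U : Ultrafilter ℕ := hyperfilter ℕ
  have hU : (U : Filter ℕ) ≤ atTop := by
    rw [← Nat.cofinite_eq_atTop]; exact hyperfilter_le_cofinite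
  have hn0 : ∀ n : ℕ, (0:ℝ) < (n + 2 : ℕ) := fun n => by positivity
  have hB : 0 ≤ B := (norm_nonneg _).trans (hp 0 0)
  choose q hqC hq using fun t : ℝ => ultra_limit U hC (fun n => x n ⌊t * (n + 2 : ℕ)⌋)
    (fun n => hx _ _)
  choose v hvC hv using fun t : ℝ => ultra_limit U (isCompact_closedBall (0:E) B)
    (fun n => p n ⌊t * (n + 2 : ℕ)⌋) (fun n => by simpa using hp _ _)
  obtain ⟨k, hkI, hk⟩ := ultra_limit U (isCompact_Icc (a := l0) (b := l1)) l hl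
  obtain ⟨G0, hG0⟩ := hC.exists_bound_of_continuousOn hgw
  have hG0nn : 0 ≤ G0 := (norm_nonneg _).trans (hG0 _ (hx 0 0))
  have hl1 : 0 ≤ l1 := hl0.le.trans ((hl 0).1.trans (hl 0).2)
  set A : ℝ := l1 * G0 with hA
  have hA0 : 0 ≤ A := by positivity
  -- discrete Lipschitz bounds
  have xL : ∀ n (i : ℤ) (m : ℕ), ‖x n (i + m) - x n i‖ ≤ B * ((m : ℝ) / (n + 2 : ℕ)) := by
    intro n i m
    have := telescope (x n) 0 0 (B / (n + 2 : ℕ)) i m (fun k _ => by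
      rw [smul_zero, sub_zero, hxs, norm_smul, Real.norm_of_nonneg (by positivity),
        one_div_mul_eq_div]
      gcongr
      exact hp _ _)
    rw [smul_zero, sub_zero] at this
    refine this.trans (le_of_eq ?_)
    ring
  have pL : ∀ n (i : ℤ) (m : ℕ), ‖p n (i + m) - p n i‖ ≤ A * ((m : ℝ) / (n + 2 : ℕ)) := by
    intro n i m
    have := telescope (p n) 0 0 (A / (n + 2 : ℕ)) i m (fun k _ => by
      have hln := hl0.le.trans (hl n).1
      rw [smul_zero, sub_zero, hps, norm_neg, norm_smul, Real.norm_of_nonneg (by positivity),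
        div_mul_eq_mul_div]
      gcongr
      rw [hA]
      exact mul_le_mul (hl n).2 (hG0 _ (hx _ _)) (norm_nonneg _) hl1)
    rw [smul_zero, sub_zero] at this
    refine this.trans (le_of_eq ?_)
    ring
  have qL : ∀ s t, s ≤ t → ‖q t - q s‖ ≤ B * (t - s) := by
    intro s t hst
    have := transfer U hU x (fun _ _ => 0) q (fun _ => 0) hq (fun _ => tendsto_const_nhds) B
      (t - s + 1) (fun n i m _ => by simpa using xL n i m) s t hst (by linarith)
    simpa using this
  have vL : ∀ s t, s ≤ t → ‖v t - v s‖ ≤ A * (t - s) := by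
    intro s t hst
    have := transfer U hU p (fun _ _ => 0) v (fun _ => 0) hv (fun _ => tendsto_const_nhds) A
      (t - s + 1) (fun n i m _ => by simpa using pL n i m) s t hst (by linarith)
    simpa using this
  have contL : ∀ (f : ℝ → E) (c : ℝ), 0 ≤ c → (∀ s t, s ≤ t → ‖f t - f s‖ ≤ c * (t - s)) →
      Continuous f := by
    intro f c hc h
    refine LipschitzWith.continuous (K := ⟨c, hc⟩) (LipschitzWith.of_dist_le_mul fun s t => ?_)
    rw [dist_eq_norm, Real.dist_eq]
    rcases le_total s t with hst | hst
    · rw [norm_sub_rev, abs_sub_comm, abs_of_nonneg (sub_nonneg.2 hst)]; exact h s t hst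
    · rw [abs_of_nonneg (sub_nonneg.2 hst)]; exact h t s hst
  have qc := contL q B hB qL
  have vc := contL v A hA0 vL
  have gqc : Continuous fun t => gw (q t) := hgw.comp_continuous qc hqC
  have gwlim : ∀ t : ℝ, Tendsto (fun n => gw (x n ⌊t * (n + 2 : ℕ)⌋)) U (𝓝 (gw (q t))) := fun t =>
    (hgw _ (hqC t)).tendsto.comp
      (tendsto_nhdsWithin_iff.2 ⟨hq t, Eventually.of_forall fun n => hx _ _⟩)
  have energy : ∀ (j : ℕ → ℕ), (∀ n, j n < n + 2) → ∃ t,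
      Tendsto (fun n => ‖p n (j n)‖ ^ 2 / 2 + l n * w (x n (j n))) U
        (𝓝 (‖v t‖ ^ 2 / 2 + k * w (q t))) := by
    intro j hj
    obtain ⟨t, -, ht⟩ := ultra_limit U (isCompact_Icc (a := (0:ℝ)) (b := 1))
      (fun n => (((j n : ℕ) : ℤ) : ℝ) / (n + 2 : ℕ)) (fun n => by
        refine ⟨by positivity, ?_⟩
        rw [div_le_one (hn0 n)]
        exact_mod_cast (hj n).le)
    refine ⟨t, ?_⟩
    have h1 := lip_index U hU x B xL t (q t) (hq t) (fun n => j n) ht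
    have h2 := lip_index U hU p A pL t (v t) (hv t) (fun n => j n) ht
    have h3 : Tendsto (fun n => w (x n (j n))) U (𝓝 (w (q t))) :=
      (hw _ (hqC t)).tendsto.comp
        (tendsto_nhdsWithin_iff.2 ⟨h1, Eventually.of_forall fun n => hx _ _⟩)
    exact ((h2.norm.pow 2).div_const 2).add (hk.mul h3)
  refine ⟨q, v, k, hl0.trans_le hkI.1, hqC, ?_, ?_, ?_, ?_, ?_⟩
  · refine hasDerivAt_of_right q v vc fun ε hε => ⟨ε / (A + 1), by positivity, ?_⟩
    refine transfer U hU x p q v hq hv ε _ fun n i m hm => ?_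
    have hA1 : A * (m / (n + 2 : ℕ)) ≤ ε := by
      rw [lt_div_iff₀ (by positivity)] at hm
      have : 0 ≤ (m : ℝ) / (n + 2 : ℕ) := by positivity
      nlinarith
    have := telescope (x n) (p n i) (1 / (n + 2 : ℕ)) (ε / (n + 2 : ℕ)) i m (fun k hk => by
      rw [hxs, ← smul_sub, norm_smul, Real.norm_of_nonneg (by positivity), one_div_mul_eq_div]
      gcongr
      refine (pL n i k).trans (le_trans ?_ hA1)
      have : (k : ℝ) ≤ m := by exact_mod_cast hk.le
      gcongr)
    rw [mul_one_div] at this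
    refine this.trans (le_of_eq ?_)
    ring
  · refine hasDerivAt_of_right v (fun t => -(k • gw (q t))) (gqc.const_smul k).neg
      fun ε hε => ?_
    have huc := hC.uniformContinuousOn_of_continuous hgw
    obtain ⟨δ, hδ, hd⟩ := Metric.uniformContinuousOn_iff.1 huc (ε / (l1 + 1)) (by positivity)
    refine ⟨δ / (B + 1), by positivity, ?_⟩
    refine transfer U hU p (fun n i => -(l n • gw (x n i))) v _ hv
      (fun t => (hk.smul (gwlim t)).neg) ε _ fun n i m hm => ?_
    have hB1 : B * (m / (n + 2 : ℕ)) < δ := by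
      rw [lt_div_iff₀ (by positivity)] at hm
      have : 0 ≤ (m : ℝ) / (n + 2 : ℕ) := by positivity
      nlinarith
    have := telescope (p n) (-(l n • gw (x n i))) (1 / (n + 2 : ℕ)) (ε / (n + 2 : ℕ)) i m
      (fun k hk => by
      have h1 : dist (gw (x n (i + k + 1))) (gw (x n i)) < ε / (l1 + 1) := by
        refine hd _ (hx _ _) _ (hx _ _) ?_
        rw [dist_eq_norm]
        have := xL n i (k + 1)
        push_cast at this
        rw [← add_assoc] at this
        refine this.trans_lt (lt_of_le_of_lt ?_ hB1)
        have : (k : ℝ) + 1 ≤ m := by exact_mod_cast hk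
        push_cast
        gcongr
      rw [dist_eq_norm] at h1
      have hln := hl0.le.trans (hl n).1
      have e : p n (i + k + 1) - p n (i + k) - (1 / ((n + 2 : ℕ) : ℝ)) • -(l n • gw (x n i))
          = -((1 / ((n + 2 : ℕ) : ℝ)) • (l n • (gw (x n (i + k + 1)) - gw (x n i)))) := by
        rw [hps, div_eq_mul_one_div]; module
      rw [e, norm_neg, norm_smul, norm_smul, Real.norm_of_nonneg (by positivity),
        Real.norm_of_nonneg hln, one_div_mul_eq_div]
      gcongr
      calc l n * ‖gw (x n (i + k + 1)) - gw (x n i)‖ ≤ l1 * (ε / (l1 + 1)) :=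
            mul_le_mul (hl n).2 h1.le (norm_nonneg _) hl1
        _ ≤ (l1 + 1) * (ε / (l1 + 1)) := by gcongr; linarith
        _ = ε := by field_simp)
    rw [mul_one_div] at this
    refine this.trans (le_of_eq ?_)
    ring
  · intro t
    have h1 := hq (t + 1)
    have h2 : ∀ n : ℕ, x n ⌊(t + 1) * (n + 2 : ℕ)⌋ = x n ⌊t * (n + 2 : ℕ)⌋ := by
      intro n
      rw [add_mul, one_mul, Int.floor_add_natCast, hper]
    simp only [h2] at h1
    exact tendsto_nhds_unique h1 (hq t)
  · choose j hj hj2 using hneg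
    obtain ⟨t, ht⟩ := energy j hj
    exact ⟨t, le_of_tendsto ht (Eventually.of_forall fun n => hj2 n)⟩
  · choose j hj hj2 using hpos
    obtain ⟨t, ht⟩ := energy j hj
    exact ⟨t, ge_of_tendsto ht (Eventually.of_forall fun n => hj2 n)⟩

end limit

section wellorbit
variable {E : Type*} [NormedAddCommGroup E] [InnerProductSpace ℝ E]

/-- Discrete momentum. -/
noncomputable def pz {N : ℕ} (q : ZMod N → E) (i : ZMod N) : E := (N : ℝ) • (q (i + 1) - q i)

lemma sum_pz {N : ℕ} [NeZero N] (q : ZMod N → E) : ∑ i, ‖pz q i‖ ^ 2 = 2 * N * KK q := by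
  unfold KK pz
  simp only [norm_smul, mul_pow, Real.norm_natCast]
  rw [← Finset.mul_sum]
  ring

lemma pz_bound {N : ℕ} [NeZero N] (q : ZMod N → E) (K A : ℝ) (hK : KK q ≤ K) (hA : 0 ≤ A)
    (h : ∀ i, ‖pz q (i + 1) - pz q i‖ ≤ A / N) (i : ZMod N) : ‖pz q i‖ ≤ √(2 * K) + A := by
  have hN := Npos (N := N)
  obtain ⟨i0, -, hi0⟩ : ∃ i ∈ (Finset.univ : Finset (ZMod N)), ‖pz q i‖ ^ 2 ≤ 2 * K := by
    refine Finset.exists_le_of_sum_le Finset.univ_nonempty ?_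
    rw [sum_pz]
    simp only [Finset.sum_const, Finset.card_univ, ZMod.card, nsmul_eq_mul]
    nlinarith
  have h1 : ∀ m : ℕ, ‖pz q (i0 + m)‖ ≤ √(2 * K) + m * (A / N) := by
    intro m
    induction m with
    | zero => simpa using Real.le_sqrt_of_sq_le hi0
    | succ m ih =>
      have h2 := h (i0 + m)
      have h3 := norm_add_le (pz q (i0 + m + 1) - pz q (i0 + m)) (pz q (i0 + m))
      rw [sub_add_cancel] at h3
      push_cast
      rw [← add_assoc]
      linarith
  have h2 := h1 (i - i0).val
  rw [ZMod.natCast_zmod_val, add_sub_cancel] at h2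
  have h3 : ((i - i0).val : ℝ) ≤ N := by exact_mod_cast (ZMod.val_lt _).le
  have h4 : ((i - i0).val : ℝ) * (A / N) ≤ N * (A / N) := by gcongr
  rw [mul_div_cancel₀ _ hN.ne'] at h4
  linarith

theorem well_orbit [FiniteDimensional ℝ E] [Nontrivial E] (P : Well E) :
    ∃ (q v : ℝ → E) (k : ℝ), 0 < k ∧ (∀ t, q t ∈ P.D) ∧ (∀ t, HasDerivAt q (v t) t) ∧
      (∀ t, HasDerivAt v (-(k • P.gw (q t))) t) ∧ (∀ t, q (t + 1) = q t) ∧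
      ∀ t, ‖v t‖ ^ 2 / 2 + k * P.w (q t) = 0 := by
  obtain ⟨s, K, l0, l1, hl0, hK0, hfam⟩ := discrete_family P
  choose q l hl1 hl2 hC hK hKW heq using fun n : ℕ => hfam (n + 2) (by omega)
  set C : Set E := {x | x ∈ P.D ∧ P.w x ≤ s} with hCdef
  have hCc : IsCompact C := P.comp s
  have hgw : ContinuousOn P.gw C := fun x hx => (P.gwc x hx.1).continuousWithinAt
  have hw : ContinuousOn P.w C := fun x hx => (P.hw x hx.1).continuousAt.continuousWithinAt
  obtain ⟨G0, hG0⟩ := hCc.exists_bound_of_continuousOn hgw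
  have hG0nn : 0 ≤ G0 := (norm_nonneg _).trans (hG0 _ (hC 0 0))
  have hl1nn : 0 ≤ l1 := hl0.le.trans ((hl1 0).trans (hl2 0))
  have hstep : ∀ n i, pz (q n) (i + 1) - pz (q n) i
      = -((l n / ((n + 2 : ℕ) : ℝ)) • P.gw (q n (i + 1))) := by
    intro n i
    rw [← heq n (i + 1), add_sub_cancel_right]
    rfl
  have hpb : ∀ n i, ‖pz (q n) i‖ ≤ √(2 * K) + l1 * G0 := by
    intro n i
    refine pz_bound (q n) K (l1 * G0) (hK n) (by positivity) (fun i => ?_) i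
    have hln := hl0.le.trans (hl1 n)
    rw [hstep, norm_neg, norm_smul, Real.norm_of_nonneg (by positivity), div_mul_eq_mul_div]
    gcongr
    · exact hl2 n
    · exact hG0 _ (hC n _)
  have hsum : ∀ n, ∑ i, (‖pz (q n) i‖ ^ 2 / 2 + l n * P.w (q n i)) = 0 := by
    intro n
    rw [Finset.sum_add_distrib, ← Finset.sum_div, ← Finset.mul_sum, sum_pz, sum_w, hKW]
    ring
  obtain ⟨Q, v, k, hk, hQC, hQ, hv, hper, ⟨t1, ht1⟩, t2, ht2⟩ :=
    limit_orbit hCc P.w P.gw hw hgw l0 l1 (√(2 * K) + l1 * G0) hl0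
    (fun n j => q n (j : ZMod (n + 2))) (fun n j => pz (q n) (j : ZMod (n + 2))) l
    (fun n => ⟨hl1 n, hl2 n⟩) (fun n j => hC n _) (fun n j => hpb n _)
    (fun n j => by
      have : (((n + 2 : ℕ) : ℝ)) ≠ 0 := by positivity
      simp only [pz, smul_smul, one_div, inv_mul_cancel₀ this, one_smul]
      push_cast; rfl)
    (fun n j => by
      have := hstep n (j : ZMod (n + 2))
      push_cast at this ⊢
      exact this)
    (fun n j => by
      congr 1
      rw [Int.cast_add, Int.cast_natCast, ZMod.natCast_self, add_zero])
    (fun n => by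
      obtain ⟨i, -, hi⟩ : ∃ i ∈ (Finset.univ : Finset (ZMod (n + 2))),
          ‖pz (q n) i‖ ^ 2 / 2 + l n * P.w (q n i) ≤ 0 := by
        refine Finset.exists_le_of_sum_le Finset.univ_nonempty ?_
        rw [hsum]; simp
      refine ⟨i.val, ZMod.val_lt i, ?_⟩
      rw [Int.cast_natCast, ZMod.natCast_zmod_val]
      exact hi)
    (fun n => by
      obtain ⟨i, -, hi⟩ : ∃ i ∈ (Finset.univ : Finset (ZMod (n + 2))),
          0 ≤ ‖pz (q n) i‖ ^ 2 / 2 + l n * P.w (q n i) := by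
        refine Finset.exists_le_of_sum_le Finset.univ_nonempty ?_
        rw [hsum]; simp
      refine ⟨i.val, ZMod.val_lt i, ?_⟩
      rw [Int.cast_natCast, ZMod.natCast_zmod_val]
      exact hi)
  refine ⟨Q, v, k, hk, fun t => (hQC t).1, hQ, hv, hper, ?_⟩
  have hder : ∀ t, HasDerivAt (fun t => ‖v t‖ ^ 2 / 2 + k * P.w (Q t)) 0 t := by
    intro t
    have h1 := ((hv t).norm_sq).div_const 2
    have h2 := ((P.hw _ (hQC t).1).comp_hasDerivAt t (hQ t)).const_mul k
    refine (h1.add h2).congr_deriv ?_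
    simp only [innerSL_apply_apply, inner_neg_right, inner_smul_right]
    rw [real_inner_comm]
    ring
  have hconst : ∀ a b, (‖v a‖ ^ 2 / 2 + k * P.w (Q a)) = ‖v b‖ ^ 2 / 2 + k * P.w (Q b) :=
    is_const_of_deriv_eq_zero (fun t => (hder t).differentiableAt) (fun t => (hder t).deriv)
  intro t
  have h1 := hconst t t1
  have h2 := hconst t t2
  linarith

end wellorbit

section makewell
variable {E : Type*} [NormedAddCommGroup E] [InnerProductSpace ℝ E]

lemma hasDerivAt_max_sq (s : ℝ) : HasDerivAt (fun t : ℝ => (max t 0) ^ 2) (2 * max s 0) s := by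
  rw [hasDerivAt_iff_isLittleO]
  have h1 : (fun t : ℝ => (max t 0) ^ 2 - (max s 0) ^ 2 - (t - s) • (2 * max s 0))
      =O[𝓝 s] fun t => (t - s) ^ 2 := by
    refine Asymptotics.IsBigO.of_bound 1 (Eventually.of_forall fun t => ?_)
    rw [one_mul, Real.norm_eq_abs, Real.norm_eq_abs, abs_of_nonneg (sq_nonneg (t - s)), abs_le,
      smul_eq_mul]
    rcases le_total t 0 with ht | ht <;> rcases le_total s 0 with hs | hs <;>
      simp only [max_eq_left, max_eq_right, ht, hs] <;> constructor <;> nlinarith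
  refine h1.trans_isLittleO ?_
  have h2 : (fun t : ℝ => (t - s) ^ 2) =o[𝓝 s] fun t => (t - s) ^ 1 := by
    have h3 : (fun y : ℝ => y ^ 2) =o[𝓝 0] fun y : ℝ => y ^ 1 :=
      Asymptotics.isLittleO_pow_pow (by norm_num)
    have h4 : Tendsto (fun t : ℝ => t - s) (𝓝 s) (𝓝 0) := by
      have : Tendsto (fun t : ℝ => t - s) (𝓝 s) (𝓝 (s - s)) :=
        (continuous_id.sub continuous_const).tendsto s
      rwa [sub_self] at this
    exact h3.comp_tendsto h4
  simpa using h2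

/-- The modified profile. -/
noncomputable def Ph (η y : ℝ) : ℝ := y + (max y 0) ^ 2 / (η - y) ^ 4

/-- The derivative of the modified profile. -/
noncomputable def Ph' (η y : ℝ) : ℝ :=
  1 + 2 * max y 0 / (η - y) ^ 4 + 4 * (max y 0) ^ 2 / (η - y) ^ 5

lemma hasDerivAt_Ph {η y : ℝ} (h : y < η) : HasDerivAt (Ph η) (Ph' η y) y := by
  have h0 : η - y ≠ 0 := by linarith
  have h1 : HasDerivAt (fun y : ℝ => (η - y) ^ 4) (4 * (η - y) ^ 3 * (-1)) y := by
    have := ((hasDerivAt_id y).const_sub η).pow 4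
    refine (this.congr_deriv ?_ : _)
    simp
  have h2 := (hasDerivAt_id y).add ((hasDerivAt_max_sq y).div h1 (pow_ne_zero 4 h0))
  refine (h2.congr_deriv ?_ : _)
  unfold Ph'
  field_simp
  ring

lemma continuousAt_Ph' {η y : ℝ} (h : y < η) : ContinuousAt (Ph' η) y := by
  have h0 : η - y ≠ 0 := by linarith
  unfold Ph'
  have h4 : (η - y) ^ 4 ≠ 0 := pow_ne_zero _ h0
  have h5 : (η - y) ^ 5 ≠ 0 := pow_ne_zero _ h0
  fun_prop (disch := assumption)

lemma Ph_nonpos {η y : ℝ} (h : y ≤ 0) : Ph η y = y ∧ Ph' η y = 1 := by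
  simp [Ph, Ph', max_eq_right h]

lemma Ph_ge {η y : ℝ} (h : y < η) : y ≤ Ph η y := by
  unfold Ph
  have : 0 < η - y := by linarith
  have : 0 ≤ (max y 0) ^ 2 / (η - y) ^ 4 := by positivity
  linarith

lemma lip_ball {F : Type*} [NormedAddCommGroup F] [NormedSpace ℝ F] [FiniteDimensional ℝ E]
    (f : E → F) (hf : ContDiff ℝ 1 f) (R : ℝ) :
    ∃ L, 0 ≤ L ∧ ∀ x y, ‖x‖ ≤ R → ‖y‖ ≤ R → ‖f x - f y‖ ≤ L * ‖x - y‖ := by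
  obtain ⟨C, hC⟩ := (isCompact_closedBall (0:E) R).exists_bound_of_continuousOn
    (hf.continuous_fderiv one_ne_zero).continuousOn
  refine ⟨max C 0, le_max_right _ _, fun x y hx hy => ?_⟩
  refine (convex_closedBall (0:E) R).norm_image_sub_le_of_norm_fderiv_le (𝕜 := ℝ)
    (fun z _ => hf.differentiable one_ne_zero z)
    (fun z hz => (hC z hz).trans (le_max_left _ _)) ?_ ?_
  · simpa using hy
  · simpa using hx

lemma make_well [FiniteDimensional ℝ E] [CompleteSpace E] (v : E → ℝ) (hv : ContDiff ℝ 2 v)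
    (hcomp : IsCompact {x | v x ≤ 0}) (hreg : ∀ x, v x = 0 → gradient v x ≠ 0)
    (hne : ∃ x, v x ≤ 0) :
    ∃ P : Well E, ∀ x ∈ P.D, P.w x ≤ 0 → P.w x = v x ∧ P.gw x = gradient v x := by
  have hvc : Continuous v := hv.continuous
  have hgC : ContDiff ℝ 1 (gradient v) := by
    have h1 : ContDiff ℝ 1 (fderiv ℝ v) := hv.fderiv_right (by norm_num)
    exact (InnerProductSpace.toDual ℝ E).symm.contDiff.comp h1
  have hgc : Continuous (gradient v) := hgC.continuous
  have hvd : ∀ x, HasFDerivAt v (innerSL ℝ (gradient v x)) x := by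
    intro x
    have h1 := ((hv.differentiable two_ne_zero) x).hasGradientAt
    exact h1.hasFDerivAt
  obtain ⟨R, hR0, hR⟩ : ∃ R : ℝ, 0 < R ∧ ∀ x, v x ≤ 0 → ‖x‖ < R := by
    obtain ⟨R, hR⟩ := hcomp.isBounded.exists_norm_le
    refine ⟨max R 0 + 1, by positivity, fun x hx => ?_⟩
    have := hR x hx
    have := le_max_left R 0
    linarith
  obtain ⟨m, hm0, hm⟩ := (isCompact_sphere (0:E) R).exists_forall_le' (a := (0:ℝ))
    hvc.continuousOn (fun x hx => by
      by_contra hc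
      have := hR x (not_lt.1 hc)
      simp at hx
      linarith)
  obtain ⟨δ0, hδ0, hδ⟩ := (isCompact_closedBall (0:E) R).exists_forall_le' (a := (0:ℝ))
    (f := fun x => ‖gradient v x‖ ^ 2 + |v x|) (by fun_prop) (fun x _ => by
      by_cases h : v x = 0
      · have := norm_pos_iff.2 (hreg x h)
        positivity
      · have := abs_pos.2 h
        positivity)
  obtain ⟨M0, hM0⟩ := (isCompact_closedBall (0:E) R).exists_bound_of_continuousOn
    hvc.continuousOn
  obtain ⟨L, hL0, hL⟩ := lip_ball (gradient v) hgC R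
  obtain ⟨G, hG0, hG⟩ := lip_ball v (hv.of_le (by norm_num)) R
  obtain ⟨x0, hx0⟩ : ∃ x, v x < 0 := by
    obtain ⟨x, hx⟩ := hne
    by_contra hc
    push Not at hc
    have h0 : v x = 0 := le_antisymm hx (hc x)
    have hmin : IsLocalMin v x := Eventually.of_forall fun y => by rw [h0]; exact hc y
    refine hreg x h0 ?_
    rw [gradient, hmin.fderiv_eq_zero, map_zero]
  have hM0nn : 0 ≤ M0 := (norm_nonneg _).trans (hM0 0 (by simpa using hR0.le))
  set η : ℝ := min (m / 2) (δ0 / 4) with hη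
  have hη0 : 0 < η := by positivity
  have hηm : η < m := (min_le_left _ _).trans_lt (by linarith)
  have hηδ : η ≤ δ0 / 4 := min_le_right _ _
  set D : Set E := {x | ‖x‖ < R ∧ v x < η} with hD
  have hlow : ∀ x ∈ D, -M0 ≤ v x := fun x hx =>
    (abs_le.1 (hM0 x (by simpa using hx.1.le))).1
  have hPd : ∀ x ∈ D, HasFDerivAt (fun x => Ph η (v x))
      (innerSL ℝ (Ph' η (v x) • gradient v x)) x := by
    intro x hx
    have h1 := (hasDerivAt_Ph hx.2).comp_hasFDerivAt x (hvd x)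
    refine h1.congr_fderiv ?_
    ext y
    simp
  have hwge : ∀ x ∈ D, η ^ 2 / 4 / (η - v x) ^ 4 - (M0 + 4 / η ^ 2) ≤ Ph η (v x) := by
    intro x hx
    have hd : 0 < η - v x := by linarith [hx.2]
    have hl := hlow x hx
    rcases le_total (η / 2) (v x) with h | h
    · have h1 : η ^ 2 / 4 / (η - v x) ^ 4 ≤ (max (v x) 0) ^ 2 / (η - v x) ^ 4 := by
        gcongr
        rw [max_eq_left (by linarith)]
        nlinarith
      unfold Ph
      have : 0 ≤ 4 / η ^ 2 := by positivity
      linarith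
    · have h1 : η ^ 2 / 4 / (η - v x) ^ 4 ≤ η ^ 2 / 4 / (η / 2) ^ 4 := by
        gcongr
        linarith
      have h2 : η ^ 2 / 4 / (η / 2) ^ 4 = 4 / η ^ 2 := by
        field_simp
        norm_num
      have := Ph_ge hx.2
      linarith
  refine ⟨{
    D := D
    w := fun x => Ph η (v x)
    gw := fun x => Ph' η (v x) • gradient v x
    X := gradient v
    M := M0 + 4 / η ^ 2
    δ := δ0 / 4
    L := L
    R := R
    x0 := x0
    isOpen := (isOpen_lt continuous_norm continuous_const).inter (isOpen_lt hvc continuous_const)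
    bdd := fun x hx => hx.1
    hw := hPd
    gwc := ?_
    comp := ?_
    Mpos := by positivity
    wlow := ?_
    Lnn := hL0
    XL := fun x hx y hy => hL x y hx.1.le hy.1.le
    δpos := by positivity
    contact := ?_
    x0mem := ⟨hR x0 hx0.le, hx0.trans hη0⟩
    wx0 := by rw [(Ph_nonpos hx0.le).1]; exact hx0
    dd := fun x => η - v x
    G := G
    c := η ^ 2 / 4
    c2 := η * (η + M0) ^ 4 + η ^ 2
    Gnn := hG0
    cpos := by positivity
    c2nn := by positivity
    ddpos := fun x hx => by linarith [hx.2]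
    ddL := fun x hx y hy => by
      have := hG x y hx.1.le hy.1.le
      rw [show η - v x - (η - v y) = -(v x - v y) by ring, abs_neg]
      exact this
    wge := hwge
    wle := ?_ }, ?_⟩
  · intro x hx
    have h1 : ContinuousAt (fun x => Ph' η (v x)) x :=
      ContinuousAt.comp (g := Ph' η) (continuousAt_Ph' hx.2) hvc.continuousAt
    exact h1.smul hgc.continuousAt
  · intro s
    set s' : ℝ := max (s + (M0 + 4 / η ^ 2)) 1 with hs'
    have hs'0 : 0 < s' := lt_max_of_lt_right one_pos
    set d1 : ℝ := min 1 (η ^ 2 / 4 / s') with hd1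
    have hd10 : 0 < d1 := by positivity
    set T : Set E := {x | x ∈ Metric.closedBall (0:E) R ∧ v x ≤ η - d1} with hT
    have hTc : IsCompact T :=
      (isCompact_closedBall (0:E) R).inter_right (isClosed_le hvc continuous_const)
    have hTD : T ⊆ D := by
      intro x hx
      have h1 : ‖x‖ ≤ R := by simpa using hx.1
      refine ⟨lt_of_le_of_ne h1 fun h => ?_, by linarith [hx.2]⟩
      have := hm x (by simpa using h)
      linarith [hx.2]
    have hwT : ContinuousOn (fun x => Ph η (v x)) T := fun x hx =>
      (hPd x (hTD hx)).continuousAt.continuousWithinAt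
    have e : {x | x ∈ D ∧ Ph η (v x) ≤ s} = T ∩ (fun x => Ph η (v x)) ⁻¹' Set.Iic s := by
      ext x
      constructor
      · rintro ⟨hx, hxs⟩
        refine ⟨⟨by simpa using hx.1.le, ?_⟩, hxs⟩
        have h1 := hwge x hx
        have hd : 0 < η - v x := by linarith [hx.2]
        have h2 : η ^ 2 / 4 / (η - v x) ^ 4 ≤ s' := by
          refine le_trans ?_ (le_max_left _ _)
          linarith
        by_contra hc
        push Not at hc
        have h3 : η - v x < d1 := by linarith
        have h4 : η - v x < 1 := h3.trans_le (min_le_left _ _)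
        have h5 : η - v x < η ^ 2 / 4 / s' := h3.trans_le (min_le_right _ _)
        have h6 : (η - v x) ^ 4 ≤ η - v x := by
          calc (η - v x) ^ 4 ≤ (η - v x) ^ 1 := pow_le_pow_of_le_one hd.le h4.le (by norm_num)
            _ = _ := pow_one _
        rw [div_le_iff₀ (by positivity)] at h2
        rw [lt_div_iff₀ hs'0] at h5
        nlinarith
      · rintro ⟨hx, hxs⟩
        exact ⟨hTD hx, hxs⟩
    rw [e]
    exact hTc.of_isClosed_subset (hwT.preimage_isClosed_of_isClosed hTc.isClosed isClosed_Iic)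
      Set.inter_subset_left
  · intro x hx
    have := Ph_ge hx.2
    have := hlow x hx
    have : 0 ≤ 4 / η ^ 2 := by positivity
    linarith
  · intro x hx
    have h1 := hδ x (by simpa using hx.1.le)
    rw [inner_smul_left, real_inner_self_eq_norm_sq]
    simp only [conj_trivial]
    rcases le_total (v x) 0 with h | h
    · rw [(Ph_nonpos h).1, (Ph_nonpos h).2]
      rw [abs_of_nonpos h] at h1
      linarith
    · have hd : 0 < η - v x := by linarith [hx.2]
      rw [abs_of_nonneg h] at h1
      have h2 : δ0 / 2 ≤ ‖gradient v x‖ ^ 2 := by linarith [hx.2]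
      unfold Ph Ph'
      rw [max_eq_left h]
      have h3 : 0 ≤ 2 * v x / (η - v x) ^ 4 := by positivity
      have h4 : (v x) ^ 2 / (η - v x) ^ 4 ≤ 4 * v x ^ 2 / (η - v x) ^ 5 * (δ0 / 2) := by
        rw [div_mul_eq_mul_div, div_le_div_iff₀ (by positivity) (by positivity)]
        have : η - v x ≤ 4 * (δ0 / 2) := by linarith
        calc v x ^ 2 * (η - v x) ^ 5 = v x ^ 2 * (η - v x) ^ 4 * (η - v x) := by ring
          _ ≤ v x ^ 2 * (η - v x) ^ 4 * (4 * (δ0 / 2)) := by gcongr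
          _ = _ := by ring
      have h5 : 0 ≤ 1 + 2 * v x / (η - v x) ^ 4 + 4 * v x ^ 2 / (η - v x) ^ 5 := by positivity
      have h6 := mul_le_mul_of_nonneg_left h2 h5
      have h7 : 0 ≤ 2 * v x / (η - v x) ^ 4 * (δ0 / 2) := by positivity
      nlinarith [hx.2]
  · intro x hx
    have hd : 0 < η - v x := by linarith [hx.2]
    have hl := hlow x hx
    have h1 : v x ≤ η * (η + M0) ^ 4 / (η - v x) ^ 4 := by
      rw [le_div_iff₀ (by positivity)]
      have h2 : (η - v x) ^ 4 ≤ (η + M0) ^ 4 := by gcongr; linarith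
      calc v x * (η - v x) ^ 4 ≤ η * (η - v x) ^ 4 := by gcongr; exact hx.2.le
        _ ≤ _ := by gcongr
    have h2 : (max (v x) 0) ^ 2 / (η - v x) ^ 4 ≤ η ^ 2 / (η - v x) ^ 4 := by
      gcongr
      exact max_le hx.2.le hη0.le
    unfold Ph
    rw [add_div]
    linarith
  · intro x hx hxw
    have h : v x ≤ 0 := (Ph_ge hx.2).trans hxw
    dsimp only
    rw [(Ph_nonpos h).1, (Ph_nonpos h).2, one_smul]
    exact ⟨rfl, rfl⟩

end makewell

lemma closed_orbit_aux {E : Type*} [NormedAddCommGroup E] [InnerProductSpace ℝ E]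
    [FiniteDimensional ℝ E] [CompleteSpace E] [Nontrivial E]
    (V : E → ℝ) (hV : ContDiff ℝ 2 V) (h : ℝ)
    (hne : ∃ x : E × E, V x.1 + ‖x.2‖ ^ 2 / 2 = h)
    (hcompact : IsCompact {x : E × E | V x.1 + ‖x.2‖ ^ 2 / 2 = h})
    (hreg : ∀ x : E × E, V x.1 + ‖x.2‖ ^ 2 / 2 = h → ¬(gradient V x.1 = 0 ∧ x.2 = 0)) :
    ∃ T : ℝ, 0 < T ∧ ∃ q : ℝ → E,
      ContDiff ℝ 2 q ∧
      Function.Periodic q T ∧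
      (∃ t : ℝ, q t ≠ q 0) ∧
      (∀ t : ℝ, deriv (deriv q) t = -gradient V (q t)) ∧
      V (q 0) + ‖deriv q 0‖ ^ 2 / 2 = h := by
  have hg : ∀ x, gradient (fun x => V x - h) x = gradient V x := by
    intro x
    simp only [gradient, fderiv_sub_const]
  have hset : {x | V x - h ≤ 0} = Prod.fst '' {x : E × E | V x.1 + ‖x.2‖ ^ 2 / 2 = h} := by
    ext x
    simp only [Set.mem_setOf_eq, Set.mem_image, Prod.exists, exists_and_right, exists_eq_right]
    constructor
    · intro hx
      obtain ⟨y, hy⟩ := exists_norm_eq E (Real.sqrt_nonneg (2 * (h - V x)))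
      refine ⟨y, ?_⟩
      rw [hy, Real.sq_sqrt (by linarith)]
      ring
    · rintro ⟨y, hy⟩
      have := sq_nonneg ‖y‖
      linarith
  obtain ⟨P, hP⟩ := make_well (fun x => V x - h) (hV.sub contDiff_const)
    (by rw [hset]; exact hcompact.image continuous_fst)
    (fun x hx hgx => by
      rw [hg] at hgx
      exact hreg (x, 0) (by simpa using by linarith) ⟨hgx, rfl⟩)
    (by
      obtain ⟨x, hx⟩ := hne
      refine ⟨x.1, ?_⟩
      have := sq_nonneg ‖x.2‖
      linarith)
  obtain ⟨Q, v, k, hk, hQD, hQ, hv, hper, hen⟩ := well_orbit P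
  have hw0 : ∀ t, P.w (Q t) ≤ 0 := by
    intro t
    have h1 := hen t
    have h2 := sq_nonneg ‖v t‖
    by_contra hc
    push Not at hc
    have := mul_pos hk hc
    linarith
  have hwV : ∀ t, P.w (Q t) = V (Q t) - h := fun t => (hP _ (hQD t) (hw0 t)).1
  have hgV : ∀ t, P.gw (Q t) = gradient V (Q t) := fun t => by
    rw [(hP _ (hQD t) (hw0 t)).2, hg]
  set c : ℝ := 1 / √k with hc
  have hsk : 0 < √k := Real.sqrt_pos.2 hk
  have hc0 : 0 < c := by positivity
  have hck : c * c * k = 1 := by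
    have : √k * √k = k := Real.mul_self_sqrt hk.le
    rw [hc]
    field_simp
    linarith
  set q : ℝ → E := fun t => Q (c * t) with hq
  have hlin : ∀ t, HasDerivAt (fun t : ℝ => c * t) c t := fun t => by
    simpa using (hasDerivAt_id t).const_mul c
  have hq1 : ∀ t, HasDerivAt q (c • v (c * t)) t := fun t =>
    (hQ (c * t)).scomp t (hlin t)
  have hd1 : deriv q = fun t => c • v (c * t) := funext fun t => (hq1 t).deriv
  have hq2 : ∀ t, HasDerivAt (deriv q) (-gradient V (q t)) t := by
    intro t
    rw [hd1]
    have h1 := ((hv (c * t)).scomp t (hlin t)).const_smul c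
    refine (h1.congr_deriv ?_ : _)
    rw [hgV, smul_neg, smul_neg, smul_smul, smul_smul, hck, one_smul]
  have hd2 : deriv (deriv q) = fun t => -gradient V (q t) := funext fun t => (hq2 t).deriv
  have hqc : Continuous q := continuous_iff_continuousAt.2 fun t => (hq1 t).continuousAt
  have hgc : Continuous (gradient V) := by
    have h1 : ContDiff ℝ 1 (fderiv ℝ V) := hV.fderiv_right (by norm_num)
    exact (InnerProductSpace.toDual ℝ E).symm.continuous.comp h1.continuous
  have henq : V (q 0) + ‖deriv q 0‖ ^ 2 / 2 = h := by
    have h1 := hen (c * 0)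
    rw [hwV] at h1
    have e : ‖deriv q 0‖ ^ 2 = c * c * ‖v (c * 0)‖ ^ 2 := by
      rw [hd1]
      simp only [norm_smul, Real.norm_of_nonneg hc0.le]
      ring
    rw [e]
    have h2 : c * c * (‖v (c * 0)‖ ^ 2 / 2 + k * (V (Q (c * 0)) - h)) = 0 := by rw [h1, mul_zero]
    have h3 : c * c * (‖v (c * 0)‖ ^ 2 / 2 + k * (V (Q (c * 0)) - h))
        = c * c * ‖v (c * 0)‖ ^ 2 / 2 + (c * c * k) * (V (Q (c * 0)) - h) := by ring
    rw [h3, hck, one_mul] at h2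
    simp only [hq]
    linarith
  refine ⟨√k, hsk, q, ?_, ?_, ?_, fun t => (hq2 t).deriv, henq⟩
  · rw [show (2 : WithTop ℕ∞) = 1 + 1 by norm_num, contDiff_succ_iff_deriv]
    refine ⟨fun t => (hq1 t).differentiableAt, by simp, ?_⟩
    rw [contDiff_one_iff_deriv]
    refine ⟨fun t => (hq2 t).differentiableAt, ?_⟩
    rw [hd2]
    exact (hgc.comp hqc).neg
  · intro t
    simp only [hq]
    rw [mul_add, show c * √k = 1 by rw [hc]; field_simp, hper]
  · by_contra hcon
    push Not at hcon
    have hqe : q = fun _ => q 0 := funext hcon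
    have h1 : deriv q = fun _ => 0 := by rw [hqe]; simp
    have h2 : deriv (deriv q) 0 = 0 := by rw [h1]; simp
    rw [hd2] at h2
    have h3 : gradient V (q 0) = 0 := by simpa using h2
    have h4 : deriv q 0 = 0 := by rw [h1]
    exact hreg (q 0, deriv q 0) henq ⟨h3, h4⟩

end Helpers

/-- **Existence of closed orbits on compact regular energy levels (Bolotin), Euclidean case.**
If the energy level `S_h = {(q,p) | V q + ‖p‖²/2 = h}` is nonempty, compact and regular,
then Newton's equation `q'' = -∇V(q)` has a nonconstant periodic solution on the energy
level `h`. -/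
theorem closed_orbit_exists
    (n : ℕ) (hn : 1 ≤ n)
    (V : EuclideanSpace ℝ (Fin n) → ℝ) (hV : ContDiff ℝ (⊤ : ℕ∞) V) (h : ℝ)
    (hne : ∃ x : EuclideanSpace ℝ (Fin n) × EuclideanSpace ℝ (Fin n),
      V x.1 + ‖x.2‖ ^ 2 / 2 = h)
    (hcompact : IsCompact
      {x : EuclideanSpace ℝ (Fin n) × EuclideanSpace ℝ (Fin n) | V x.1 + ‖x.2‖ ^ 2 / 2 = h})
    (hreg : ∀ x : EuclideanSpace ℝ (Fin n) × EuclideanSpace ℝ (Fin n),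
      V x.1 + ‖x.2‖ ^ 2 / 2 = h → ¬(gradient V x.1 = 0 ∧ x.2 = 0)) :
    ∃ T : ℝ, 0 < T ∧ ∃ q : ℝ → EuclideanSpace ℝ (Fin n),
      ContDiff ℝ 2 q ∧
      Function.Periodic q T ∧
      (∃ t : ℝ, q t ≠ q 0) ∧
      (∀ t : ℝ, deriv (deriv q) t = -gradient V (q t)) ∧
      V (q 0) + ‖deriv q 0‖ ^ 2 / 2 = h := by
  have : Nonempty (Fin n) := ⟨⟨0, hn⟩⟩
  exact closed_orbit_aux V (hV.of_le (WithTop.coe_le_coe.2 (le_top : (2 : ℕ∞) ≤ ⊤))) h hne hcompact hreg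
end

section
/- Let a, b, λ ≥ 0 and δ > 0 satisfy δ²λ < π². Then there exists a constant c > 0, depending only on a, b, λ, δ, with the following property: for all real numbers s₀ < s₁ with s₁ − s₀ ≤ δ and every smooth function α : ℝ² → ℝ satisfying (i) ∂ₜα(s,0) = 0 and ∂ₜα(s,1) = 0 for all s ∈ [s₀,s₁], (ii) Δα + λα + a ≥ 0 on [s₀,s₁] × [0,1], and (iii) α(s₀,t) ≤ b and α(s₁,t) ≤ b for all t ∈ [0,1], one has α(s,t) ≤ c for all (s,t) ∈ [s₀,s₁] × [0,1]. -/
open Set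

/-- The standard Laplacian `Δα = ∂²α/∂s² + ∂²α/∂t²` of a function `α : ℝ² → ℝ`. -/
noncomputable def lapl (α : ℝ × ℝ → ℝ) (s t : ℝ) : ℝ :=
  deriv (deriv fun s' => α (s', t)) s + deriv (deriv fun t' => α (s, t')) t

/-- The partial derivative `∂ₜα` of `α : ℝ² → ℝ` in the second variable. -/
noncomputable def pderivT (α : ℝ × ℝ → ℝ) (s t : ℝ) : ℝ :=
  deriv (fun t' => α (s, t')) t

lemma second_deriv_right {f : ℝ → ℝ} (hf : ContDiff ℝ 2 f) {x y : ℝ} (hxy : x < y)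
    (h0 : deriv f x = 0) (hm : ∀ z ∈ Icc x y, f z ≤ f x) : deriv (deriv f) x ≤ 0 := by
  by_contra! hpos
  have hd : Differentiable ℝ f := hf.differentiable (by norm_num)
  have hc : ContDiff ℝ 1 (deriv f) := hf.deriv' (n := 1)
  have hc2 : Continuous (deriv (deriv f)) := hc.continuous_deriv le_rfl
  have hev : ∀ᶠ z in nhds x, 0 < deriv (deriv f) z := hc2.continuousAt.eventually (lt_mem_nhds hpos)
  obtain ⟨ε, hε, hball⟩ := Metric.eventually_nhds_iff.1 hev
  set z := min y (x + ε / 2) with hz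
  have hxz : x < z := lt_min hxy (by linarith)
  have hzy : z ≤ y := min_le_left _ _
  have hze : z ≤ x + ε / 2 := min_le_right _ _
  have hmono : StrictMonoOn (deriv f) (Icc x z) := by
    apply strictMonoOn_of_deriv_pos (convex_Icc x z) hc.continuous.continuousOn
    intro u hu
    rw [interior_Icc] at hu
    apply hball
    rw [Real.dist_eq, abs_of_pos (by linarith [hu.1])]
    linarith [hu.2]
  have hmono2 : StrictMonoOn f (Icc x z) := by
    apply strictMonoOn_of_deriv_pos (convex_Icc x z) hd.continuous.continuousOn
    intro u hu
    rw [interior_Icc] at hu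
    have := hmono (left_mem_Icc.2 hxz.le) (Ioo_subset_Icc_self hu) hu.1
    linarith
  have h1 := hmono2 (left_mem_Icc.2 hxz.le) (right_mem_Icc.2 hxz.le) hxz
  have h2 := hm z ⟨hxz.le, hzy⟩
  linarith

lemma second_deriv_left {f : ℝ → ℝ} (hf : ContDiff ℝ 2 f) {x y : ℝ} (hxy : y < x)
    (h0 : deriv f x = 0) (hm : ∀ z ∈ Icc y x, f z ≤ f x) : deriv (deriv f) x ≤ 0 := by
  have hD : deriv (fun u => f (-u)) = fun u => -deriv f (-u) := by
    funext u; exact deriv_comp_neg f u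
  have h := second_deriv_right (f := fun u => f (-u)) (x := -x) (y := -y)
    (hf.comp contDiff_neg) (by linarith) (by rw [hD]; simp [h0])
    (by
      intro z hz
      simp only [neg_neg]
      exact hm _ ⟨by linarith [hz.2], by linarith [hz.1]⟩)
  rw [hD] at h
  have h3 : deriv (fun u => -deriv f (-u)) (-x) = deriv (deriv f) x := by
    rw [deriv.fun_neg, deriv_comp_neg (deriv f)]; simp
  rwa [h3] at h

/-- The barrier has second derivative `-μ²` times itself. -/
lemma barrier_deriv (k m : ℝ) :
    deriv (fun s => Real.cos (k * (s - m))) = fun s => -k * Real.sin (k * (s - m)) := by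
  funext s
  have h : HasDerivAt (fun s => k * (s - m)) (k * 1) s :=
    ((hasDerivAt_id s).sub_const m).const_mul k
  rw [h.cos.deriv]; ring

lemma barrier_deriv2 (k m s : ℝ) :
    deriv (fun s => -k * Real.sin (k * (s - m))) s = -k ^ 2 * Real.cos (k * (s - m)) := by
  have h : HasDerivAt (fun s => k * (s - m)) (k * 1) s :=
    ((hasDerivAt_id s).sub_const m).const_mul k
  rw [(h.sin.const_mul (-k)).deriv]; ring

/-- **Maximum principle on a strip with Neumann boundary conditions** (Lemma 3.5).
If `δ²λ < π²` there is a constant `c = c(a,b,λ,δ)` bounding any smooth `α` on a strip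
`[s₀,s₁] × [0,1]` of width `≤ δ` which satisfies the Neumann condition `∂ₜα = 0` on
the horizontal boundary, the differential inequality `Δα + λα + a ≥ 0`, and `α ≤ b`
on the vertical boundary. -/
theorem maximum_principle_strip
    (a b lam δ : ℝ) (ha : 0 ≤ a) (hb : 0 ≤ b) (hlam : 0 ≤ lam) (hδ : 0 < δ)
    (hδlam : δ ^ 2 * lam < Real.pi ^ 2) :
    ∃ c : ℝ, 0 < c ∧ ∀ (s₀ s₁ : ℝ) (α : ℝ × ℝ → ℝ),
      s₀ < s₁ → s₁ - s₀ ≤ δ → ContDiff ℝ (⊤ : ℕ∞) α →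
      (∀ s ∈ Icc s₀ s₁, pderivT α s 0 = 0 ∧ pderivT α s 1 = 0) →
      (∀ s ∈ Icc s₀ s₁, ∀ t ∈ Icc (0:ℝ) 1, 0 ≤ lapl α s t + lam * α (s, t) + a) →
      (∀ t ∈ Icc (0:ℝ) 1, α (s₀, t) ≤ b ∧ α (s₁, t) ≤ b) →
      ∀ s ∈ Icc s₀ s₁, ∀ t ∈ Icc (0:ℝ) 1, α (s, t) ≤ c := by
  have hpi := Real.pi_pos
  obtain ⟨mu, hmu1, hmu2⟩ : ∃ mu, lam < mu ∧ mu < Real.pi ^ 2 / δ ^ 2 := by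
    apply exists_between
    rw [lt_div_iff₀ (by positivity)]; linarith
  have hmu0 : 0 < mu := by linarith
  set k := Real.sqrt mu with hk
  have hk0 : 0 < k := Real.sqrt_pos.2 hmu0
  have hk2 : k ^ 2 = mu := Real.sq_sqrt hmu0.le
  have hkδ : k * δ < Real.pi := by
    rw [lt_div_iff₀ (by positivity)] at hmu2
    apply lt_of_pow_lt_pow_left₀ 2 hpi.le
    rw [mul_pow, hk2]; exact hmu2
  set κ := Real.cos (k * δ / 2) with hκ
  have hkδ0 : 0 < k * δ := by positivity
  have hκ0 : 0 < κ := Real.cos_pos_of_mem_Ioo ⟨by linarith, by linarith⟩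
  have hml : 0 < mu - lam := by linarith
  set C := b / κ + a / ((mu - lam) * κ) + 1 with hC
  have hb' : 0 ≤ b / κ := by positivity
  have ha' : 0 ≤ a / ((mu - lam) * κ) := by positivity
  have hC0 : 0 < C := by linarith
  refine ⟨C, hC0, ?_⟩
  intro s₀ s₁ α hs hsδ hα hN hL hB
  set m := (s₀ + s₁) / 2 with hm
  set w : ℝ → ℝ := fun s => Real.cos (k * (s - m)) with hw
  have hwκ : ∀ s ∈ Icc s₀ s₁, κ ≤ w s := by
    intro s hs'
    have h1 : |s - m| ≤ δ / 2 := by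
      rw [abs_le]; constructor <;> linarith [hs'.1, hs'.2]
    have h2 : |k * (s - m)| ≤ k * δ / 2 := by
      rw [abs_mul, abs_of_pos hk0]; nlinarith
    simp only [hw]
    rw [← Real.cos_abs (k * (s - m))]
    exact Real.cos_le_cos_of_nonneg_of_le_pi (abs_nonneg _) (by linarith) h2
  have hwc : ContDiff ℝ 2 w := by
    simp only [hw]; fun_prop
  have hα2 : ContDiff ℝ 2 α := contDiff_infty.1 hα 2
  obtain ⟨⟨p, q⟩, ⟨hp, hq⟩, hmax⟩ := (isCompact_Icc.prod isCompact_Icc :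
      IsCompact (Icc s₀ s₁ ×ˢ Icc (0:ℝ) 1)).exists_isMaxOn
      (f := fun z : ℝ × ℝ => α z / w z.1)
      ⟨(s₀, 0), ⟨left_mem_Icc.2 hs.le, by simp⟩⟩
      (hα.continuous.continuousOn.div (hwc.continuous.comp continuous_fst).continuousOn
        (fun z hz => (lt_of_lt_of_le hκ0 (hwκ _ hz.1)).ne'))
  simp only at hp hq
  set K := α (p, q) / w p with hK
  have hwp : 0 < w p := lt_of_lt_of_le hκ0 (hwκ _ hp)
  have hαp : α (p, q) = K * w p := by rw [hK]; field_simp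
  have hle : ∀ s ∈ Icc s₀ s₁, ∀ t ∈ Icc (0:ℝ) 1, α (s, t) ≤ K * w s := by
    intro s hs' t ht
    have h := hmax (show (s, t) ∈ Icc s₀ s₁ ×ˢ Icc (0:ℝ) 1 from ⟨hs', ht⟩)
    exact (div_le_iff₀ (lt_of_lt_of_le hκ0 (hwκ _ hs'))).1 h
  have hKC : K ≤ C := by
    by_contra! hlt
    have hK0 : 0 < K := by linarith
    have hbK : b < K * κ := by
      rw [← div_lt_iff₀ hκ0]; linarith
    have haK : a < K * ((mu - lam) * κ) := by
      rw [← div_lt_iff₀ (by positivity)]; linarith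
    have hbα : b < α (p, q) := by
      rw [hαp]; nlinarith [hwκ p hp]
    have hp0 : s₀ < p := lt_of_le_of_ne hp.1 (by rintro rfl; linarith [(hB q hq).1])
    have hp1 : p < s₁ := lt_of_le_of_ne hp.2 (by rintro rfl; linarith [(hB q hq).2])
    -- second derivative in t
    have hft : ContDiff ℝ 2 (fun t' => α (p, t')) := hα2.comp (by fun_prop)
    have hmt : ∀ t ∈ Icc (0:ℝ) 1, α (p, t) ≤ α (p, q) := fun t ht => by
      rw [hαp]; exact hle p hp t ht
    have htt : deriv (deriv fun t' => α (p, t')) q ≤ 0 := by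
      rcases eq_or_lt_of_le hq.2 with h1 | h1
      · refine second_deriv_left hft (y := 0) (by linarith) ?_ ?_
        · rw [h1]; exact (hN p hp).2
        · intro z hz; exact hmt z ⟨hz.1, by linarith [hz.2]⟩
      · refine second_deriv_right hft h1 ?_ ?_
        · rcases eq_or_lt_of_le hq.1 with h0 | h0
          · rw [← h0]; exact (hN p hp).1
          · apply IsLocalMax.deriv_eq_zero
            filter_upwards [Icc_mem_nhds h0 h1] with z hz
            exact hmt z hz
        · intro z hz; exact hmt z ⟨by linarith [hz.1, hq.1], hz.2⟩
    -- second derivative in s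
    have hfs : ContDiff ℝ 2 (fun s' => α (s', q)) := hα2.comp (by fun_prop)
    have hgs : ContDiff ℝ 2 (fun s' => α (s', q) - K * w s') := hfs.sub (contDiff_const.mul hwc)
    have hms : ∀ s ∈ Icc s₀ s₁, α (s, q) - K * w s ≤ α (p, q) - K * w p := fun s hs' => by
      rw [hαp]; linarith [hle s hs' q hq]
    have hss : deriv (deriv fun s' => α (s', q) - K * w s') p ≤ 0 := by
      refine second_deriv_right hgs hp1 ?_ ?_
      · apply IsLocalMax.deriv_eq_zero
        filter_upwards [Icc_mem_nhds hp0 hp1] with z hz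
        exact hms z hz
      · intro z hz; exact hms z ⟨by linarith [hz.1], hz.2⟩
    have hD1 : deriv (fun s' => α (s', q) - K * w s') =
        fun s => deriv (fun s' => α (s', q)) s - K * (-k * Real.sin (k * (s - m))) := by
      funext s
      rw [deriv_fun_sub (hfs.differentiable (by norm_num) s)
        ((hwc.differentiable (by norm_num) s).const_mul K),
        deriv_const_mul _ (hwc.differentiable (by norm_num) s), hw, barrier_deriv]
    have hfs' : ContDiff ℝ 1 (deriv (fun s' => α (s', q))) := hfs.deriv' (n := 1)
    have hsd : DifferentiableAt ℝ (fun s => -k * Real.sin (k * (s - m))) p := by fun_prop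
    rw [hD1, deriv_fun_sub (hfs'.differentiable (by norm_num) p) (hsd.const_mul K),
      deriv_const_mul _ hsd, barrier_deriv2, hk2] at hss
    have hLp := hL p hp q hq
    unfold lapl at hLp
    have hwp' : Real.cos (k * (p - m)) = w p := rfl
    rw [hwp'] at hss
    rw [hαp] at hLp
    have h5 : (mu - lam) * (K * κ) ≤ (mu - lam) * (K * w p) :=
      mul_le_mul_of_nonneg_left (mul_le_mul_of_nonneg_left (hwκ p hp) hK0.le) hml.le
    nlinarith
  intro s hs' t ht
  have h1 := hle s hs' t ht
  have hw0 := lt_of_lt_of_le hκ0 (hwκ s hs')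
  have hw1 : w s ≤ 1 := Real.cos_le_one _
  calc α (s, t) ≤ K * w s := h1
    _ ≤ C * w s := mul_le_mul_of_nonneg_right hKC hw0.le
    _ ≤ C * 1 := mul_le_mul_of_nonneg_left hw1 hC0.le
    _ = C := mul_one C
end

section
/- Let a, b, λ ≥ 0 and δ > 0 satisfy δ²λ < π². Then there exists a constant C > 0, depending only on a, b, λ, δ, with the following property: for all real numbers s₀ < s₁ with s₁ − s₀ ≤ δ and every smooth function α : ℝ² → ℝ satisfying (i) α(s, t+1) = α(s,t) for all (s,t) ∈ ℝ² (periodicity in the second variable), (ii) Δα + λα + a ≥ 0 on [s₀,s₁] × ℝ, and (iii) α(s₀,t) ≤ b and α(s₁,t) ≤ b for all t ∈ ℝ, one has α(s,t) ≤ C for all (s,t) ∈ [s₀,s₁] × ℝ. -/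
open Set

theorem deriv_deriv_nonpos_of_isLocalMax {f : ℝ → ℝ} {x : ℝ} (h : IsLocalMax f x)
    (hc : ContinuousAt f x) : deriv (deriv f) x ≤ 0 := by
  by_contra hpos
  push Not at hpos
  have hmin := isLocalMin_of_deriv_deriv_pos hpos h.deriv_eq_zero hc
  have heq : f =ᶠ[nhds x] fun _ => f x := by
    filter_upwards [h, hmin] with y h1 h2
    exact le_antisymm h1 h2
  have h2 : deriv (deriv f) x = 0 := by
    rw [heq.deriv.deriv_eq]
    simp
  linarith

theorem deriv_deriv_sub_cos {f : ℝ → ℝ} (hf : ContDiff ℝ 2 f) (M w m s : ℝ) :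
    deriv (deriv fun x => f x - M * Real.cos (w * (x - m))) s =
      deriv (deriv f) s + M * w ^ 2 * Real.cos (w * (s - m)) := by
  have hd : Differentiable ℝ f := hf.differentiable (by norm_num)
  have hd' : Differentiable ℝ (deriv f) :=
    (contDiff_succ_iff_deriv.1 (show ContDiff ℝ (1 + 1) f by
      simpa [one_add_one_eq_two] using hf)).2.2.differentiable (by norm_num)
  have hl : ∀ x, HasDerivAt (fun x => w * (x - m)) w x := fun x => by
    simpa using ((hasDerivAt_id x).sub_const m).const_mul w
  have h1 : (deriv fun x => f x - M * Real.cos (w * (x - m))) =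
      fun x => deriv f x - M * (-Real.sin (w * (x - m)) * w) := by
    funext x
    exact ((hd x).hasDerivAt.sub (((hl x).cos).const_mul M)).deriv
  rw [h1]
  have h2 := ((hd' s).hasDerivAt.sub ((((hl s).sin.neg).mul_const w).const_mul M)).deriv
  refine Eq.trans h2 ?_
  ring

/-- **Maximum principle on a finite cylinder** (Floer–Hofer, Proposition 8; Lemma 3.8).
If `δ²λ < π²` there is a constant `C = C(a,b,λ,δ)` bounding any smooth `α` on
`[s₀,s₁] × ℝ/ℤ` (i.e. `1`-periodic in the second variable), where `s₁ - s₀ ≤ δ`,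
which satisfies `Δα + λα + a ≥ 0` and `α ≤ b` on the vertical boundary. -/
theorem maximum_principle_cylinder
    (a b lam δ : ℝ) (ha : 0 ≤ a) (hb : 0 ≤ b) (hlam : 0 ≤ lam) (hδ : 0 < δ)
    (hδlam : δ ^ 2 * lam < Real.pi ^ 2) :
    ∃ C : ℝ, 0 < C ∧ ∀ (s₀ s₁ : ℝ) (α : ℝ × ℝ → ℝ),
      s₀ < s₁ → s₁ - s₀ ≤ δ → ContDiff ℝ (⊤ : ℕ∞) α →
      (∀ s t : ℝ, α (s, t + 1) = α (s, t)) →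
      (∀ s ∈ Icc s₀ s₁, ∀ t : ℝ, 0 ≤ lapl α s t + lam * α (s, t) + a) →
      (∀ t : ℝ, α (s₀, t) ≤ b ∧ α (s₁, t) ≤ b) →
      ∀ s ∈ Icc s₀ s₁, ∀ t : ℝ, α (s, t) ≤ C := by
  obtain ⟨w, hw0, hwδ, hwl⟩ : ∃ w : ℝ, 0 < w ∧ w * δ < Real.pi ∧ lam < w ^ 2 := by
    have hs : Real.sqrt lam < Real.pi / δ := by
      rw [Real.sqrt_lt' (by positivity), div_pow, lt_div_iff₀ (by positivity)]
      linarith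
    obtain ⟨w, h1, h2⟩ := exists_between hs
    have h0 : 0 < w := (Real.sqrt_nonneg lam).trans_lt h1
    exact ⟨w, h0, (lt_div_iff₀ hδ).1 h2, (Real.sqrt_lt' h0).1 h1⟩
  have hwδ0 : 0 < w * δ := mul_pos hw0 hδ
  set c := Real.cos (w * δ / 2) with hc
  have hc0 : 0 < c := Real.cos_pos_of_mem_Ioo ⟨by linarith, by linarith⟩
  have hμ : 0 < w ^ 2 - lam := by linarith
  have hA : 0 ≤ a / (w ^ 2 - lam) / c := by positivity
  have hB : 0 ≤ b / c := by positivity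
  refine ⟨a / (w ^ 2 - lam) / c + b / c + 1, by positivity, ?_⟩
  intro s₀ s₁ α h01 hle hα hper hlap hbd
  set m := (s₀ + s₁) / 2 with hm
  have hcos : ∀ s ∈ Icc s₀ s₁, c ≤ Real.cos (w * (s - m)) := by
    intro s hs
    have h1 : |w * (s - m)| ≤ w * δ / 2 := by
      rw [abs_mul, abs_of_pos hw0, mul_div_assoc]
      refine mul_le_mul_of_nonneg_left ?_ hw0.le
      rw [abs_le]
      constructor <;> linarith [hs.1, hs.2]
    rw [hc, ← Real.cos_abs (w * (s - m))]
    exact Real.cos_le_cos_of_nonneg_of_le_pi (abs_nonneg _) (by linarith) h1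
  have hαc : Continuous α := hα.continuous
  obtain ⟨⟨p, q⟩, hpq, hmax⟩ := (isCompact_Icc.prod isCompact_Icc :
      IsCompact (Icc s₀ s₁ ×ˢ Icc (0:ℝ) 1)).exists_isMaxOn
    ⟨(s₀, 0), ⟨⟨le_rfl, h01.le⟩, ⟨le_rfl, zero_le_one⟩⟩⟩
    (f := fun z => α z / Real.cos (w * (z.1 - m)))
    (ContinuousOn.div hαc.continuousOn (by fun_prop)
      (fun z hz => (hc0.trans_le (hcos z.1 hz.1)).ne'))
  have hp : p ∈ Icc s₀ s₁ := hpq.1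
  have hcp := hcos p hp
  have hcp0 := hc0.trans_le hcp
  set M := α (p, q) / Real.cos (w * (p - m)) with hM
  have hMp : α (p, q) = M * Real.cos (w * (p - m)) := by
    rw [hM]; field_simp
  have hall : ∀ s ∈ Icc s₀ s₁, ∀ t, α (s, t) ≤ M * Real.cos (w * (s - m)) := by
    intro s hs t
    have hP : Function.Periodic (fun t => α (s, t)) 1 := fun t => hper s t
    obtain ⟨y, hy, hy'⟩ := hP.exists_mem_Ico₀ one_pos t
    have hy'' : α (s, t) = α (s, y) := hy'
    rw [hy'']
    have h3 : α (s, y) / Real.cos (w * (s - m)) ≤ M := hmax ⟨hs, ⟨hy.1, hy.2.le⟩⟩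
    exact (div_le_iff₀ (hc0.trans_le (hcos s hs))).1 h3
  have hMle : M ≤ a / (w ^ 2 - lam) / c + b / c := by
    by_cases hM0 : M < 0
    · linarith
    push Not at hM0
    have hbcase : α (p, q) ≤ b → M ≤ b / c := by
      intro h
      rw [le_div_iff₀ hc0]
      exact (mul_le_mul_of_nonneg_left hcp hM0).trans (hMp ▸ h)
    rcases eq_or_lt_of_le hp.1 with h | hp1
    · have := hbcase (h ▸ (hbd q).1)
      linarith
    rcases eq_or_lt_of_le hp.2 with h | hp2
    · have := hbcase (h ▸ (hbd q).2)
      linarith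
    have hs2 : ContDiff ℝ 2 (fun s => α (s, q)) :=
      (contDiff_infty.1 hα 2).comp (contDiff_id.prodMk contDiff_const)
    have e1 : deriv (deriv fun x => α (x, q) - M * Real.cos (w * (x - m))) p ≤ 0 := by
      apply deriv_deriv_nonpos_of_isLocalMax
      · filter_upwards [Icc_mem_nhds hp1 hp2] with x hx
        linarith [hall x hx q]
      · exact Continuous.continuousAt (by fun_prop)
    rw [deriv_deriv_sub_cos hs2] at e1
    have e2 : deriv (deriv fun t => α (p, t)) q ≤ 0 := by
      apply deriv_deriv_nonpos_of_isLocalMax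
      · refine Filter.Eventually.of_forall fun t => ?_
        change α (p, t) ≤ α (p, q)
        rw [hMp]
        exact hall p hp t
      · exact Continuous.continuousAt (by fun_prop)
    have e3 := hlap p hp q
    unfold lapl at e3
    rw [hMp] at e3
    have e4 : M * Real.cos (w * (p - m)) * (w ^ 2 - lam) ≤ a := by nlinarith
    have e5 : M ≤ a / (w ^ 2 - lam) / c := by
      rw [le_div_iff₀ hc0, le_div_iff₀ hμ]
      exact (mul_le_mul_of_nonneg_right (mul_le_mul_of_nonneg_left hcp hM0) hμ.le).trans e4
    linarith
  intro s hs t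
  have h1 := hall s hs t
  have h2 := Real.cos_le_one (w * (s - m))
  have h3 := hc0.trans_le (hcos s hs)
  have h4 : (a / (w ^ 2 - lam) / c + b / c) * Real.cos (w * (s - m))
      ≤ (a / (w ^ 2 - lam) / c + b / c) * 1 := mul_le_mul_of_nonneg_left h2 (by linarith)
  have h5 := mul_le_mul_of_nonneg_right hMle h3.le
  linarith
end

section
/- Let s₀ < s₁ be real numbers and let α : ℝ² → ℝ be smooth with ∂ₜα(s,0) = 0 and ∂ₜα(s,1) = 0 for all s ∈ [s₀,s₁]. Then for every ε > 0 there exist δ ∈ (0, 1/2) and a smooth function β : ℝ² → ℝ such that: (i) |α(s,t) − β(s,t)| ≤ ε and |Δ(α − β)(s,t)| ≤ ε for all (s,t) ∈ [s₀,s₁] × [0,1]; (ii) β(s,t) = α(s,0) + ∂ₜ²α(s,0)·t²/2 for all s ∈ [s₀,s₁] and t ∈ [0,δ]; and (iii) β(s,t) = α(s,1) + ∂ₜ²α(s,1)·(t−1)²/2 for all s ∈ [s₀,s₁] and t ∈ [1−δ,1]. -/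
open Set

/-- The second partial derivative `∂ₜ²α` of `α : ℝ² → ℝ` in the second variable. -/
noncomputable def pderivT2 (α : ℝ × ℝ → ℝ) (s t : ℝ) : ℝ :=
  deriv (deriv fun t' => α (s, t')) t

/-- `∂ₜF` as a function on `ℝ²`. -/
noncomputable def dT (F : ℝ × ℝ → ℝ) (p : ℝ × ℝ) : ℝ := fderiv ℝ F p (0, 1)

/-- `∂ₛF` as a function on `ℝ²`. -/
noncomputable def dS (F : ℝ × ℝ → ℝ) (p : ℝ × ℝ) : ℝ := fderiv ℝ F p (1, 0)

lemma dT_smooth {F : ℝ × ℝ → ℝ} (hF : ContDiff ℝ (⊤ : ℕ∞) F) : ContDiff ℝ (⊤ : ℕ∞) (dT F) := by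
  unfold dT
  exact (hF.fderiv_right (m := (⊤ : ℕ∞)) (by simp)).clm_apply contDiff_const

lemma dS_smooth {F : ℝ × ℝ → ℝ} (hF : ContDiff ℝ (⊤ : ℕ∞) F) : ContDiff ℝ (⊤ : ℕ∞) (dS F) := by
  unfold dS
  exact (hF.fderiv_right (m := (⊤ : ℕ∞)) (by simp)).clm_apply contDiff_const

lemma hasDerivAt_T {F : ℝ × ℝ → ℝ} (hF : ContDiff ℝ (⊤ : ℕ∞) F) (s t : ℝ) :
    HasDerivAt (fun t' => F (s, t')) (dT F (s, t)) t := by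
  have h1 : HasFDerivAt F (fderiv ℝ F (s, t)) (s, t) :=
    (hF.differentiable (by simp) _).hasFDerivAt
  have h2 : HasDerivAt (fun t' : ℝ => ((s, t') : ℝ × ℝ)) (0, 1) t :=
    (hasDerivAt_const t s).prodMk (hasDerivAt_id t)
  exact h1.comp_hasDerivAt t h2

lemma hasDerivAt_S {F : ℝ × ℝ → ℝ} (hF : ContDiff ℝ (⊤ : ℕ∞) F) (s t : ℝ) :
    HasDerivAt (fun s' => F (s', t)) (dS F (s, t)) s := by
  have h1 : HasFDerivAt F (fderiv ℝ F (s, t)) (s, t) :=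
    (hF.differentiable (by simp) _).hasFDerivAt
  have h2 : HasDerivAt (fun s' : ℝ => ((s', t) : ℝ × ℝ)) (1, 0) s :=
    (hasDerivAt_id s).prodMk (hasDerivAt_const s t)
  exact h1.comp_hasDerivAt s h2

lemma deriv_T {F : ℝ × ℝ → ℝ} (hF : ContDiff ℝ (⊤ : ℕ∞) F) (s : ℝ) :
    deriv (fun t' => F (s, t')) = fun t => dT F (s, t) :=
  funext fun t => (hasDerivAt_T hF s t).deriv

lemma deriv_S {F : ℝ × ℝ → ℝ} (hF : ContDiff ℝ (⊤ : ℕ∞) F) (t : ℝ) :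
    deriv (fun s' => F (s', t)) = fun s => dS F (s, t) :=
  funext fun s => (hasDerivAt_S hF s t).deriv

lemma pderivT_eq {F : ℝ × ℝ → ℝ} (hF : ContDiff ℝ (⊤ : ℕ∞) F) (s t : ℝ) :
    pderivT F s t = dT F (s, t) := by
  unfold pderivT; rw [deriv_T hF]

lemma pderivT2_eq {F : ℝ × ℝ → ℝ} (hF : ContDiff ℝ (⊤ : ℕ∞) F) (s t : ℝ) :
    pderivT2 F s t = dT (dT F) (s, t) := by
  unfold pderivT2; rw [deriv_T hF, deriv_T (dT_smooth hF)]

lemma lapl_eq {F : ℝ × ℝ → ℝ} (hF : ContDiff ℝ (⊤ : ℕ∞) F) (s t : ℝ) :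
    lapl F s t = dS (dS F) (s, t) + dT (dT F) (s, t) := by
  unfold lapl; rw [deriv_T hF, deriv_T (dT_smooth hF), deriv_S hF, deriv_S (dS_smooth hF)]

lemma dT_add {F G : ℝ × ℝ → ℝ} (hF : ContDiff ℝ (⊤ : ℕ∞) F) (hG : ContDiff ℝ (⊤ : ℕ∞) G) :
    dT (fun x => F x + G x) = fun x => dT F x + dT G x := by
  funext ⟨s, t⟩
  exact (hasDerivAt_T (hF.add hG) s t).unique ((hasDerivAt_T hF s t).add (hasDerivAt_T hG s t))

lemma dS_add {F G : ℝ × ℝ → ℝ} (hF : ContDiff ℝ (⊤ : ℕ∞) F) (hG : ContDiff ℝ (⊤ : ℕ∞) G) :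
    dS (fun x => F x + G x) = fun x => dS F x + dS G x := by
  funext ⟨s, t⟩
  exact (hasDerivAt_S (hF.add hG) s t).unique ((hasDerivAt_S hF s t).add (hasDerivAt_S hG s t))

lemma lapl_add {F G : ℝ × ℝ → ℝ} (hF : ContDiff ℝ (⊤ : ℕ∞) F) (hG : ContDiff ℝ (⊤ : ℕ∞) G)
    (s t : ℝ) : lapl (fun x => F x + G x) s t = lapl F s t + lapl G s t := by
  rw [lapl_eq hF, lapl_eq hG, lapl_eq (hF.add hG), dT_add hF hG, dS_add hF hG,
    dT_add (dT_smooth hF) (dT_smooth hG), dS_add (dS_smooth hF) (dS_smooth hG)]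
  ring

lemma lapl_reflect (F : ℝ × ℝ → ℝ) (s t : ℝ) :
    lapl (fun x => F (x.1, 1 - x.2)) s t = lapl F s (1 - t) := by
  unfold lapl
  have h : (deriv fun t' => F (s, 1 - t')) =
      fun t' => - (deriv fun u => F (s, u)) (1 - t') := by
    funext t'
    exact deriv_comp_const_sub (f := fun u => F (s, u)) 1 t'
  simp only [h, deriv.fun_neg]
  rw [deriv_comp_const_sub (f := deriv fun u => F (s, u)) 1 t]
  simp

/-- One step of integration. -/
lemma integ_bound {F : ℝ × ℝ → ℝ} (hF : ContDiff ℝ (⊤ : ℕ∞) F) {s C : ℝ} {k : ℕ} (hC : 0 ≤ C)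
    (h0 : F (s, 0) = 0) (hb : ∀ t ∈ Icc (0:ℝ) 1, |dT F (s, t)| ≤ C * t ^ k) :
    ∀ t ∈ Icc (0:ℝ) 1, |F (s, t)| ≤ C * t ^ (k + 1) := by
  intro t ht
  have := norm_image_sub_le_of_norm_deriv_le_segment' (f := fun t' => F (s, t'))
    (f' := fun t' => dT F (s, t')) (a := 0) (b := t) (C := C * t ^ k)
    (fun x _ => (hasDerivAt_T hF s x).hasDerivWithinAt)
    (fun x hx => by
      refine (hb x ⟨hx.1, hx.2.le.trans ht.2⟩).trans ?_
      have := hx.1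
      have := hx.2.le
      gcongr) t ⟨ht.1, le_rfl⟩
  simp only [h0, sub_zero, Real.norm_eq_abs] at this
  rw [pow_succ, ← mul_assoc]
  exact this

lemma bound_on {F : ℝ × ℝ → ℝ} (hF : ContDiff ℝ (⊤ : ℕ∞) F) (s₀ s₁ : ℝ) :
    ∃ C, 0 ≤ C ∧ ∀ s ∈ Icc s₀ s₁, ∀ t ∈ Icc (0:ℝ) 1, |F (s, t)| ≤ C := by
  obtain ⟨C, hC⟩ := (isCompact_Icc.prod isCompact_Icc :
    IsCompact (Icc s₀ s₁ ×ˢ Icc (0:ℝ) 1)).exists_bound_of_continuousOn hF.continuous.continuousOn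
  exact ⟨max C 0, le_max_right _ _, fun s hs t ht => (hC (s, t) ⟨hs, ht⟩).trans (le_max_left _ _)⟩

/-- The cutoff: `1` for `u ≤ 1`, `0` for `u ≥ 2`. -/
noncomputable def chi (u : ℝ) : ℝ := Real.smoothTransition (2 - u)

lemma chi_smooth : ContDiff ℝ (⊤ : ℕ∞) chi :=
  Real.smoothTransition.contDiff.comp (contDiff_const.sub contDiff_id)

lemma chi_one {u : ℝ} (h : u ≤ 1) : chi u = 1 :=
  Real.smoothTransition.one_of_one_le (by linarith)

lemma chi_zero {u : ℝ} (h : 2 ≤ u) : chi u = 0 :=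
  Real.smoothTransition.zero_of_nonpos (by linarith)

lemma bound1 {f : ℝ → ℝ} (hf : Continuous f) :
    ∃ C, 0 ≤ C ∧ ∀ u ∈ Icc (0:ℝ) 2, |f u| ≤ C := by
  obtain ⟨C, hC⟩ := (isCompact_Icc : IsCompact (Icc (0:ℝ) 2)).exists_bound_of_continuousOn
    hf.continuousOn
  exact ⟨max C 0, le_max_right _ _, fun u hu => (hC u hu).trans (le_max_left _ _)⟩

lemma chi_bounds : ∃ M, 0 ≤ M ∧ ∀ u ∈ Icc (0:ℝ) 2,
    |chi u| ≤ M ∧ |deriv chi u| ≤ M ∧ |deriv (deriv chi) u| ≤ M := by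
  have c1 : ContDiff ℝ (⊤ : ℕ∞) (deriv chi) := (contDiff_infty_iff_deriv.1 chi_smooth).2
  have c2 : ContDiff ℝ (⊤ : ℕ∞) (deriv (deriv chi)) := (contDiff_infty_iff_deriv.1 c1).2
  obtain ⟨A, hA, hA'⟩ := bound1 chi_smooth.continuous
  obtain ⟨B, hB, hB'⟩ := bound1 c1.continuous
  obtain ⟨D, hD, hD'⟩ := bound1 c2.continuous
  refine ⟨A + B + D, by positivity, fun u hu => ⟨?_, ?_, ?_⟩⟩
  · linarith [hA' u hu]
  · linarith [hB' u hu]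
  · linarith [hD' u hu]

/-- The cut off function. -/
noncomputable def cutR (η : ℝ) (R : ℝ × ℝ → ℝ) (x : ℝ × ℝ) : ℝ := chi (η⁻¹ * x.2) * R x

lemma cutR_smooth (η : ℝ) {R : ℝ × ℝ → ℝ} (hR : ContDiff ℝ (⊤ : ℕ∞) R) :
    ContDiff ℝ (⊤ : ℕ∞) (cutR η R) :=
  (chi_smooth.comp (contDiff_const.mul contDiff_snd)).mul hR

lemma lapl_cutR (η : ℝ) {R : ℝ × ℝ → ℝ} (hR : ContDiff ℝ (⊤ : ℕ∞) R) (s t : ℝ) :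
    lapl (cutR η R) s t = chi (η⁻¹ * t) * dS (dS R) (s, t) +
      (deriv (deriv chi) (η⁻¹ * t) * η⁻¹ ^ 2 * R (s, t) +
        2 * (deriv chi (η⁻¹ * t) * η⁻¹ * dT R (s, t)) + chi (η⁻¹ * t) * dT (dT R) (s, t)) := by
  have c1 : ContDiff ℝ (⊤ : ℕ∞) (deriv chi) := (contDiff_infty_iff_deriv.1 chi_smooth).2
  have hlin : ∀ t : ℝ, HasDerivAt (fun t => η⁻¹ * t) η⁻¹ t := fun t => by
    simpa using (hasDerivAt_id t).const_mul η⁻¹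
  have k0 : ∀ t, HasDerivAt (fun t => chi (η⁻¹ * t)) (deriv chi (η⁻¹ * t) * η⁻¹) t := fun t =>
    ((chi_smooth.differentiable (by simp) _).hasDerivAt).comp t (hlin t)
  have k1 : ∀ t, HasDerivAt (fun t => deriv chi (η⁻¹ * t))
      (deriv (deriv chi) (η⁻¹ * t) * η⁻¹) t := fun t =>
    ((c1.differentiable (by simp) _).hasDerivAt).comp t (hlin t)
  unfold lapl cutR
  congr 1
  · dsimp only
    rw [show (deriv fun s' => chi (η⁻¹ * t) * R (s', t)) =
      fun s' => chi (η⁻¹ * t) * dS R (s', t) from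
        funext fun s' => ((hasDerivAt_S hR s' t).const_mul _).deriv]
    exact ((hasDerivAt_S (dS_smooth hR) s t).const_mul _).deriv
  · rw [show (deriv fun t' => chi (η⁻¹ * t') * R (s, t')) =
      fun t' => deriv chi (η⁻¹ * t') * η⁻¹ * R (s, t') + chi (η⁻¹ * t') * dT R (s, t') from
        funext fun t' => ((k0 t').mul (hasDerivAt_T hR s t')).deriv]
    have := ((((k1 t).mul_const η⁻¹).mul (hasDerivAt_T hR s t)).add
      ((k0 t).mul (hasDerivAt_T (dT_smooth hR) s t))).deriv
    refine this.trans ?_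
    ring

lemma cut_bound (s₀ s₁ : ℝ) {R : ℝ × ℝ → ℝ} (hR : ContDiff ℝ (⊤ : ℕ∞) R)
    (h0 : ∀ s, R (s, 0) = 0) (h1 : ∀ s, dT R (s, 0) = 0) (h2 : ∀ s, dT (dT R) (s, 0) = 0)
    {ε : ℝ} (hε : 0 < ε) :
    ∃ η₀ : ℝ, 0 < η₀ ∧ ∀ η, 0 < η → η ≤ η₀ → ∀ s ∈ Icc s₀ s₁, ∀ t ∈ Icc (0:ℝ) 1,
      |cutR η R (s, t)| ≤ ε ∧ |lapl (cutR η R) s t| ≤ ε := by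
  have hT := dT_smooth hR
  have hTT := dT_smooth hT
  have hSS := dS_smooth (dS_smooth hR)
  obtain ⟨A, hA, hA'⟩ := bound_on (dT_smooth hTT) s₀ s₁
  obtain ⟨B, hB, hB'⟩ := bound_on (dT_smooth hSS) s₀ s₁
  obtain ⟨M, hM, hM'⟩ := chi_bounds
  have hS0 : ∀ s, dS R (s, 0) = 0 := fun s => by
    refine (hasDerivAt_S hR s 0).unique ?_
    simp only [h0]; exact hasDerivAt_const _ _
  have hSS0 : ∀ s, dS (dS R) (s, 0) = 0 := fun s => by
    refine (hasDerivAt_S (dS_smooth hR) s 0).unique ?_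
    simp only [hS0]; exact hasDerivAt_const _ _
  set C := A + B with hCdef
  have hC : 0 ≤ C := by positivity
  refine ⟨ε / (20 * M * C + 1), by positivity, fun η hη hη' s hs t ht => ?_⟩
  rw [le_div_iff₀ (by positivity)] at hη'
  have b3 : ∀ t ∈ Icc (0:ℝ) 1, |dT (dT R) (s, t)| ≤ C * t ^ (0 + 1) :=
    integ_bound hTT hC (h2 s) (fun t ht => by
      have := hA' s hs t ht
      simp only [pow_zero, mul_one]; linarith)
  have b2 := integ_bound hT hC (h1 s) b3
  have b1 := integ_bound hR hC (h0 s) b2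
  have bS : ∀ t ∈ Icc (0:ℝ) 1, |dS (dS R) (s, t)| ≤ C * t ^ (0 + 1) :=
    integ_bound hSS hC (hSS0 s) (fun t ht => by
      have := hB' s hs t ht
      simp only [pow_zero, mul_one]; linarith)
  replace b1 := b1 t ht
  replace b2 := b2 t ht
  replace b3 := b3 t ht
  replace bS := bS t ht
  rcases le_or_gt t (2 * η) with h | h
  · obtain ⟨u, rfl⟩ : ∃ u, t = η * u := ⟨η⁻¹ * t, by field_simp⟩
    have hu : u ∈ Icc (0:ℝ) 2 := by
      refine ⟨?_, ?_⟩
      · exact nonneg_of_mul_nonneg_right ht.1 hη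
      · nlinarith
    have hu0 := hu.1
    have hu2 := hu.2
    have e : η⁻¹ * (η * u) = u := by field_simp
    obtain ⟨m0, m1, m2⟩ := hM' u hu
    have p2 : u ^ 2 ≤ 4 := by nlinarith
    have p3 : u ^ 3 ≤ 8 := by nlinarith
    have q : M * C * η ≤ M * C * η := le_rfl
    have hMC : 0 ≤ M * C * η := by positivity
    constructor
    · unfold cutR
      simp only [e]
      rw [abs_mul]
      have : (η * u) ^ 3 ≤ η * u := by
        have := ht.1; have := ht.2
        exact pow_le_of_le_one ht.1 ht.2 (by norm_num)
      calc |chi u| * |R (s, η * u)| ≤ M * (C * (η * u)) := by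
            gcongr
            exact b1.trans (by gcongr)
        _ = (M * C * η) * u := by ring
        _ ≤ (M * C * η) * 2 := by gcongr
        _ ≤ ε := by nlinarith
    · rw [lapl_cutR η hR, e]
      have x1 : |chi u * dS (dS R) (s, η * u)| ≤ (M * C * η) * 2 := by
        rw [abs_mul]
        calc _ ≤ M * (C * (η * u) ^ (0 + 1)) := by gcongr
          _ = (M * C * η) * u := by ring
          _ ≤ _ := by gcongr
      have x2 : |chi u * dT (dT R) (s, η * u)| ≤ (M * C * η) * 2 := by
        rw [abs_mul]
        calc _ ≤ M * (C * (η * u) ^ (0 + 1)) := by gcongr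
          _ = (M * C * η) * u := by ring
          _ ≤ _ := by gcongr
      have x3 : |deriv chi u * η⁻¹ * dT R (s, η * u)| ≤ (M * C * η) * 4 := by
        rw [abs_mul, abs_mul, abs_of_pos (inv_pos.2 hη)]
        calc _ ≤ M * η⁻¹ * (C * (η * u) ^ (0 + 1 + 1)) := by gcongr
          _ = (M * C * η) * u ^ 2 := by field_simp; ring
          _ ≤ _ := by gcongr
      have x4 : |deriv (deriv chi) u * η⁻¹ ^ 2 * R (s, η * u)| ≤ (M * C * η) * 8 := by
        rw [abs_mul, abs_mul, abs_of_pos (pow_pos (inv_pos.2 hη) 2)]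
        calc _ ≤ M * η⁻¹ ^ 2 * (C * (η * u) ^ (0 + 1 + 1 + 1)) := by gcongr
          _ = (M * C * η) * u ^ 3 := by field_simp; ring
          _ ≤ _ := by gcongr
      rw [abs_le] at *
      constructor <;> nlinarith
  · have z : ∀ᶠ v in nhds (η⁻¹ * t), chi v = 0 := by
      have : 2 < η⁻¹ * t := by
        rw [inv_mul_eq_div, lt_div_iff₀ hη]; exact h
      filter_upwards [lt_mem_nhds this] with v hv using chi_zero hv.le
    have z1 : deriv chi =ᶠ[nhds (η⁻¹ * t)] fun _ => 0 := by
      have : chi =ᶠ[nhds (η⁻¹ * t)] fun _ => 0 := z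
      simpa using this.deriv
    have z2 : deriv (deriv chi) (η⁻¹ * t) = 0 := by
      rw [z1.deriv_eq]; simp
    have z0 := z.self_of_nhds
    have z1' := z1.self_of_nhds
    constructor
    · simp [cutR, z0, hε.le]
    · rw [lapl_cutR η hR, z0, z1', z2]; simp [hε.le]

/-- Taylor remainder at `t = 0`. -/
noncomputable def rem (α : ℝ × ℝ → ℝ) (x : ℝ × ℝ) : ℝ :=
  α x - (α (x.1, 0) + dT α (x.1, 0) * x.2 + dT (dT α) (x.1, 0) * x.2 ^ 2 / 2)

lemma rem_props {α : ℝ × ℝ → ℝ} (hα : ContDiff ℝ (⊤ : ℕ∞) α) :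
    ContDiff ℝ (⊤ : ℕ∞) (rem α) ∧ (∀ s, rem α (s, 0) = 0) ∧ (∀ s, dT (rem α) (s, 0) = 0) ∧
      (∀ s, dT (dT (rem α)) (s, 0) = 0) := by
  have hT := dT_smooth hα
  have hTT := dT_smooth hT
  have hp : ContDiff ℝ (⊤ : ℕ∞) (fun x : ℝ × ℝ => ((x.1, 0) : ℝ × ℝ)) :=
    contDiff_fst.prodMk contDiff_const
  have hr : ContDiff ℝ (⊤ : ℕ∞) (rem α) := by
    unfold rem
    exact hα.sub (((hα.comp hp).add ((hT.comp hp).mul contDiff_snd)).add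
      (((hTT.comp hp).mul (contDiff_snd.pow 2)).div_const 2))
  have e1 : ∀ s t, dT (rem α) (s, t) = dT α (s, t) - (dT α (s, 0) + dT (dT α) (s, 0) * t) := by
    intro s t
    refine (hasDerivAt_T hr s t).unique ?_
    have := (hasDerivAt_T hα s t).sub
      (((hasDerivAt_const t (α (s, 0))).add ((hasDerivAt_id t).const_mul (dT α (s, 0)))).add
        ((((hasDerivAt_id t).pow 2).const_mul (dT (dT α) (s, 0))).div_const 2))
    refine this.congr_deriv ?_
    simp
    ring
  have e2 : ∀ s t, dT (dT (rem α)) (s, t) = dT (dT α) (s, t) - dT (dT α) (s, 0) := by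
    intro s t
    refine (hasDerivAt_T (dT_smooth hr) s t).unique ?_
    simp only [e1]
    have := (hasDerivAt_T hT s t).sub
      ((hasDerivAt_const t (dT α (s, 0))).add
        ((hasDerivAt_id t).const_mul (dT (dT α) (s, 0))))
    refine this.congr_deriv ?_
    simp
  refine ⟨hr, fun s => ?_, fun s => ?_, fun s => ?_⟩
  · simp [rem]
  · simp [e1]
  · simp [e2]

lemma dT_reflect {α : ℝ × ℝ → ℝ} (hα : ContDiff ℝ (⊤ : ℕ∞) α) (s t : ℝ) :
    dT (fun x => α (x.1, 1 - x.2)) (s, t) = - dT α (s, 1 - t) := by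
  have h : ContDiff ℝ (⊤ : ℕ∞) (fun x : ℝ × ℝ => α (x.1, 1 - x.2)) :=
    hα.comp (contDiff_fst.prodMk (contDiff_const.sub contDiff_snd))
  rw [← (hasDerivAt_T h s t).deriv, ← (hasDerivAt_T hα s (1 - t)).deriv]
  exact deriv_comp_const_sub (f := fun u => α (s, u)) 1 t

lemma dTT_reflect {α : ℝ × ℝ → ℝ} (hα : ContDiff ℝ (⊤ : ℕ∞) α) (s t : ℝ) :
    dT (dT (fun x => α (x.1, 1 - x.2))) (s, t) = dT (dT α) (s, 1 - t) := by
  have h : ContDiff ℝ (⊤ : ℕ∞) (fun x : ℝ × ℝ => α (x.1, 1 - x.2)) :=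
    hα.comp (contDiff_fst.prodMk (contDiff_const.sub contDiff_snd))
  rw [← (hasDerivAt_T (dT_smooth h) s t).deriv,
    ← (hasDerivAt_T (dT_smooth hα) s (1 - t)).deriv]
  simp only [dT_reflect hα, deriv.fun_neg]
  rw [deriv_comp_const_sub (f := fun u => dT α (s, u)) 1 t]
  simp

/-- **Approximation step in the proof of Lemma 3.5.**
A smooth function on a strip satisfying Neumann boundary conditions at `t = 0` and `t = 1`
can be approximated, with control on the Laplacian, by a smooth function which near each
horizontal boundary coincides with its second-order Taylor polynomial in `t`. -/
theorem neumann_taylor_approximation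
    (s₀ s₁ : ℝ) (hs : s₀ < s₁) (α : ℝ × ℝ → ℝ) (hα : ContDiff ℝ (⊤ : ℕ∞) α)
    (hneu : ∀ s ∈ Icc s₀ s₁, pderivT α s 0 = 0 ∧ pderivT α s 1 = 0)
    (ε : ℝ) (hε : 0 < ε) :
    ∃ δ : ℝ, 0 < δ ∧ δ < 1 / 2 ∧ ∃ β : ℝ × ℝ → ℝ, ContDiff ℝ (⊤ : ℕ∞) β ∧
      (∀ s ∈ Icc s₀ s₁, ∀ t ∈ Icc (0:ℝ) 1,
        |α (s, t) - β (s, t)| ≤ ε ∧ |lapl (fun x => α x - β x) s t| ≤ ε) ∧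
      (∀ s ∈ Icc s₀ s₁, ∀ t ∈ Icc (0:ℝ) δ,
        β (s, t) = α (s, 0) + pderivT2 α s 0 * t ^ 2 / 2) ∧
      (∀ s ∈ Icc s₀ s₁, ∀ t ∈ Icc (1 - δ) 1,
        β (s, t) = α (s, 1) + pderivT2 α s 1 * (t - 1) ^ 2 / 2) := by
  have hrefl : ContDiff ℝ (⊤ : ℕ∞) (fun x : ℝ × ℝ => ((x.1, 1 - x.2) : ℝ × ℝ)) :=
    contDiff_fst.prodMk (contDiff_const.sub contDiff_snd)
  have hα' : ContDiff ℝ (⊤ : ℕ∞) (fun x : ℝ × ℝ => α (x.1, 1 - x.2)) := hα.comp hrefl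
  obtain ⟨r, r0, r1, r2⟩ := rem_props hα
  obtain ⟨q, q0, q1, q2⟩ := rem_props hα'
  obtain ⟨a, ha, ha'⟩ := cut_bound s₀ s₁ r r0 r1 r2 (half_pos hε)
  obtain ⟨b, hb, hb'⟩ := cut_bound s₀ s₁ q q0 q1 q2 (half_pos hε)
  set α' : ℝ × ℝ → ℝ := fun x => α (x.1, 1 - x.2) with hα'def
  set η := min (min a b) (1 / 4) with hηdef
  have hη : 0 < η := by positivity
  have hηa : η ≤ a := (min_le_left _ _).trans (min_le_left _ _)
  have hηb : η ≤ b := (min_le_left _ _).trans (min_le_right _ _)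
  have hη4 : η ≤ 1 / 4 := min_le_right _ _
  have ca := cutR_smooth η r
  have cb : ContDiff ℝ (⊤ : ℕ∞) (fun x : ℝ × ℝ => cutR η (rem α') (x.1, 1 - x.2)) :=
    (cutR_smooth η q).comp hrefl
  refine ⟨η, hη, by linarith,
    fun x => α x - (cutR η (rem α) x + cutR η (rem α') (x.1, 1 - x.2)),
    hα.sub (ca.add cb), ?_, ?_, ?_⟩
  · intro s hs t ht
    have ht' : 1 - t ∈ Icc (0:ℝ) 1 := ⟨by linarith [ht.2], by linarith [ht.1]⟩
    obtain ⟨u1, u2⟩ := ha' η hη hηa s hs t ht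
    obtain ⟨v1, v2⟩ := hb' η hη hηb s hs (1 - t) ht'
    constructor
    · simp only [sub_sub_cancel]
      exact (abs_add_le _ _).trans (by linarith)
    · simp only [sub_sub_cancel]
      rw [lapl_add ca cb, lapl_reflect (cutR η (rem α'))]
      exact (abs_add_le _ _).trans (by linarith)
  · intro s hs t ht
    have k1 : chi (η⁻¹ * t) = 1 := chi_one (by
      rw [inv_mul_eq_div, div_le_iff₀ hη]; linarith [ht.2])
    have k2 : chi (η⁻¹ * (1 - t)) = 0 := chi_zero (by
      rw [inv_mul_eq_div, le_div_iff₀ hη]; linarith [ht.2])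
    have n := (hneu s hs).1
    rw [pderivT_eq hα] at n
    rw [pderivT2_eq hα]
    simp only [cutR, k1, k2, rem, n]
    ring
  · intro s hs t ht
    have k1 : chi (η⁻¹ * t) = 0 := chi_zero (by
      rw [inv_mul_eq_div, le_div_iff₀ hη]; linarith [ht.1])
    have k2 : chi (η⁻¹ * (1 - t)) = 1 := chi_one (by
      rw [inv_mul_eq_div, div_le_iff₀ hη]; linarith [ht.1])
    have n := (hneu s hs).2
    rw [pderivT_eq hα] at n
    rw [pderivT2_eq hα]
    have m1 : dT α' (s, 0) = 0 := by
      rw [hα'def, dT_reflect hα]; simp [n]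
    have m2 : dT (dT α') (s, 0) = dT (dT α) (s, 1) := by
      rw [hα'def, dTT_reflect hα]; simp
    have m3 : α' (s, 0) = α (s, 1) := by simp [hα'def]
    have m4 : α' (s, 1 - t) = α (s, t) := by simp [hα'def]
    simp only [cutR, k1, k2, rem, m1, m2, m3, m4]
    ring
end
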